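/- arXiv:1707.09563 — 10 statements merged into one kernel-verified Lean document; each statement's English description precedes it below -/
import Mathlib

section
/- Let U be a real random variable with law μ_U and continuous cdf F_U, and let X be a {0,1}-valued random variable on the same probability space with p_x = P(X = x) and p_1 ∈ (0,1). Suppose X is c-dependent with U for some c ∈ [0,1]. Then for each x ∈ {0,1} and every u ∈ ℝ, P(U ≤ u | X = x) ≤ min{ F_U(u) + (c/p_x)·min{F_U(u), 1 − F_U(u)}, F_U(u)/p_x, 1 }. -/
open MeasureTheory Set

noncomputable section

/-- `X` is `c`-dependent with the real random variable `V`: there is a measurable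
version `g` of `v ↦ P(X = 1 ∣ V = v)` taking values in `[0,1]` such that
`|g(v) - P(X = 1)| ≤ c` for `μ_V`-almost every `v`. -/
def CDep {Ω : Type*} [MeasurableSpace Ω] (P : Measure Ω) (X : Ω → ℕ) (V : Ω → ℝ)
    (c : ℝ) : Prop :=
  ∃ g : ℝ → ℝ, Measurable g ∧ (∀ v, 0 ≤ g v ∧ g v ≤ 1) ∧
    (∀ A : Set ℝ, MeasurableSet A →
      (P ({ω | X ω = 1} ∩ V ⁻¹' A)).toReal = ∫ v in A, g v ∂(Measure.map V P)) ∧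
    (∀ᵐ v ∂(Measure.map V P), |g v - (P {ω | X ω = 1}).toReal| ≤ c)

/-- Under `c`-dependence, `P(X = 1, V ∈ A)` differs from `P(X = 1) P(V ∈ A)` by at most
`c P(V ∈ A)`. -/
lemma CDep.abs_sub_le {Ω : Type*} [MeasurableSpace Ω] {P : Measure Ω} [IsProbabilityMeasure P]
    {X : Ω → ℕ} {V : Ω → ℝ} {c : ℝ} (hV : Measurable V) (h : CDep P X V c)
    {A : Set ℝ} (hA : MeasurableSet A) :
    |P.real ({ω | X ω = 1} ∩ V ⁻¹' A) - P.real {ω | X ω = 1} * P.real (V ⁻¹' A)|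
      ≤ c * P.real (V ⁻¹' A) := by
  obtain ⟨g, hg, hg01, hgA, hgc⟩ := h
  have : IsProbabilityMeasure (Measure.map V P) := Measure.isProbabilityMeasure_map hV.aemeasurable
  have hint : Integrable g (Measure.map V P) := by
    refine Integrable.of_bound hg.aestronglyMeasurable 1 (Filter.Eventually.of_forall fun v => ?_)
    rw [Real.norm_eq_abs, abs_of_nonneg (hg01 v).1]
    exact (hg01 v).2
  have hm : (Measure.map V P).real A = P.real (V ⁻¹' A) := map_measureReal_apply hV hA
  have h1 : P.real ({ω | X ω = 1} ∩ V ⁻¹' A) = ∫ v in A, g v ∂(Measure.map V P) := hgA A hA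
  have h2 : ∫ v in A, (g v - P.real {ω | X ω = 1}) ∂(Measure.map V P)
      = P.real ({ω | X ω = 1} ∩ V ⁻¹' A) - P.real {ω | X ω = 1} * P.real (V ⁻¹' A) := by
    rw [integral_sub hint.integrableOn (integrable_const _), h1, setIntegral_const, hm,
      smul_eq_mul, mul_comm (P.real (V ⁻¹' A))]
  have h3 := norm_setIntegral_le_of_norm_le_const_ae (μ := Measure.map V P) (s := A)
    (f := fun v => g v - P.real {ω | X ω = 1}) (C := c) (measure_lt_top _ _)
    (ae_restrict_of_ae hgc)
  rwa [h2, hm] at h3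

/-- Theorem 1 (upper cdf bound): under `c`-dependence, for each `x ∈ {0,1}` and all `u`,
`P(U ≤ u ∣ X = x) ≤ min { F_U(u) + (c/p_x) min{F_U(u), 1-F_U(u)}, F_U(u)/p_x, 1 }`. -/
theorem cdf_upper_bound_c_dep {Ω : Type*} [MeasurableSpace Ω]
    (P : Measure Ω) [IsProbabilityMeasure P]
    (U : Ω → ℝ) (X : Ω → ℕ) (hU : Measurable U) (hX : Measurable X)
    (hX01 : ∀ ω, X ω ≤ 1)
    (hFcont : Continuous fun u : ℝ => (P {ω | U ω ≤ u}).toReal)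
    (hp1 : (P {ω | X ω = 1}).toReal ∈ Set.Ioo (0:ℝ) 1)
    (c : ℝ) (hc : c ∈ Set.Icc (0:ℝ) 1)
    (hdep : CDep P X U c) :
    ∀ x : ℕ, x ≤ 1 → ∀ u : ℝ,
      (P ({ω | U ω ≤ u} ∩ {ω | X ω = x})).toReal / (P {ω | X ω = x}).toReal ≤
        min (min
            ((P {ω | U ω ≤ u}).toReal
              + c / (P {ω | X ω = x}).toReal
                * min (P {ω | U ω ≤ u}).toReal (1 - (P {ω | U ω ≤ u}).toReal))
            ((P {ω | U ω ≤ u}).toReal / (P {ω | X ω = x}).toReal))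
          1 := by
  intro x hx u
  have k1 := hdep.abs_sub_le hU (measurableSet_Iic (a := u))
  have k2 := hdep.abs_sub_le hU (measurableSet_Ioi (a := u))
  have mX : MeasurableSet {ω | X ω = 1} := hX (measurableSet_singleton 1)
  have mU : MeasurableSet {ω | U ω ≤ u} := hU measurableSet_Iic
  have hIic : U ⁻¹' Iic u = {ω | U ω ≤ u} := rfl
  have hIoi : U ⁻¹' Ioi u = {ω | U ω ≤ u}ᶜ := by ext ω; simp
  have hX0 : {ω | X ω = 0} = {ω | X ω = 1}ᶜ := by
    ext ω
    have := hX01 ω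
    simp only [mem_setOf_eq, mem_compl_iff]
    omega
  rw [hIic] at k1
  rw [hIoi, probReal_compl_eq_one_sub mU] at k2
  simp only [← Measure.real_def] at hp1 ⊢
  have e1 : P.real ({ω | X ω = 1} ∩ {ω | U ω ≤ u})
      + P.real ({ω | X ω = 1} ∩ {ω | U ω ≤ u}ᶜ) = P.real {ω | X ω = 1} :=
    measureReal_inter_add_diff mU
  have e2 : P.real ({ω | U ω ≤ u} ∩ {ω | X ω = 1})
      + P.real ({ω | U ω ≤ u} ∩ {ω | X ω = 1}ᶜ) = P.real {ω | U ω ≤ u} :=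
    measureReal_inter_add_diff mX
  have e3 : P.real {ω | X ω = 1}ᶜ = 1 - P.real {ω | X ω = 1} := probReal_compl_eq_one_sub mX
  rw [inter_comm {ω | U ω ≤ u} {ω | X ω = 1}] at e2
  rw [abs_le] at k1 k2
  obtain ⟨hp, hp'⟩ := hp1
  have hpx : 0 < P.real {ω | X ω = x} := by
    interval_cases x
    · rw [hX0, e3]; linarith
    · exact hp
  have key : P.real ({ω | U ω ≤ u} ∩ {ω | X ω = x}) ≤
      P.real {ω | U ω ≤ u} * P.real {ω | X ω = x}
        + c * min (P.real {ω | U ω ≤ u}) (1 - P.real {ω | U ω ≤ u}) := by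
    rw [mul_min_of_nonneg _ _ hc.1, ← min_add_add_left]
    interval_cases x
    · rw [hX0, e3]
      exact le_min (by linarith) (by linarith)
    · rw [inter_comm]
      exact le_min (by linarith) (by linarith)
  refine le_min (le_min ?_ ?_) ?_
  · rw [div_le_iff₀ hpx]
    refine key.trans (le_of_eq ?_)
    field_simp
  · exact div_le_div_of_nonneg_right (measureReal_mono inter_subset_left) hpx.le
  · exact div_le_one_of_le₀ (measureReal_mono inter_subset_right) hpx.le
end
end

section
/- Let F_U : ℝ → [0,1] be a continuous nondecreasing function with limit 0 at −∞ and limit 1 at +∞ (a continuous cdf), let p ∈ (0,1) and c ∈ [0,1]. Then the functions F̄(u) = min{ F_U(u) + (c/p)·min{F_U(u), 1 − F_U(u)}, F_U(u)/p, 1 } and F̲(u) = max{ F_U(u) − (c/p)·min{F_U(u), 1 − F_U(u)}, (F_U(u) − 1)/p + 1, 0 } are both nondecreasing and continuous on ℝ, with limit 0 at −∞ and limit 1 at +∞; in particular, this monotonicity holds even when c > p, in which case F̄(u) = min{(1 + c/p)F_U(u), F_U(u)/p, 1} and F̲(u) = max{(1 + c/p)F_U(u) − c/p, (F_U(u) −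 1)/p + 1, 0} for all u. -/
open MeasureTheory Set Filter

noncomputable section

/-- Upper `c`-dependence cdf bound function. -/
def Fupper (F : ℝ → ℝ) (p c : ℝ) (u : ℝ) : ℝ :=
  min (min (F u + c / p * min (F u) (1 - F u)) (F u / p)) 1

/-- Lower `c`-dependence cdf bound function. -/
def Flower (F : ℝ → ℝ) (p c : ℝ) (u : ℝ) : ℝ :=
  max (max (F u - c / p * min (F u) (1 - F u)) ((F u - 1) / p + 1)) 0

lemma upper_simp {k x q : ℝ} (hk : 1 ≤ k) (h1 : x ≤ 1) :
    min (min (x + k * min x (1 - x)) q) 1 = min (min ((1 + k) * x) q) 1 := by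
  rcases le_total x (1 - x) with h | h
  · rw [min_eq_left h]; ring_nf
  · rw [min_eq_right h, min_right_comm, min_right_comm ((1 + k) * x)]
    rw [min_eq_right (by nlinarith : (1:ℝ) ≤ x + k * (1 - x)),
      min_eq_right (by nlinarith : (1:ℝ) ≤ (1 + k) * x)]

lemma lower_simp {k x q : ℝ} (hk : 1 ≤ k) (h0 : 0 ≤ x) :
    max (max (x - k * min x (1 - x)) q) 0 = max (max ((1 + k) * x - k) q) 0 := by
  rcases le_total x (1 - x) with h | h
  · rw [min_eq_left h, max_right_comm, max_right_comm ((1 + k) * x - k)]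
    rw [max_eq_right (by nlinarith : x - k * x ≤ 0),
      max_eq_right (by nlinarith : (1 + k) * x - k ≤ 0)]
  · rw [min_eq_right h]; ring_nf

lemma mono_aux {k a b : ℝ} (hk0 : 0 ≤ k) (hk : k ≤ 1) (hab : a ≤ b) :
    a + k * min a (1 - a) ≤ b + k * min b (1 - b) ∧
    a - k * min a (1 - a) ≤ b - k * min b (1 - b) := by
  have h1 : min a (1 - a) - min b (1 - b) ≤ b - a := by
    rcases min_cases a (1 - a) with h | h <;> rcases min_cases b (1 - b) with h' | h' <;> linarith
  have h2 : min b (1 - b) - min a (1 - a) ≤ b - a := by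
    rcases min_cases a (1 - a) with h | h <;> rcases min_cases b (1 - b) with h' | h' <;> linarith
  constructor <;> nlinarith [mul_le_mul_of_nonneg_left h1 hk0, mul_le_mul_of_nonneg_left h2 hk0]

/-- The bound functions `F̄` and `F̲` are nondecreasing continuous cdfs (limits `0` at `-∞`
and `1` at `+∞`); in particular this holds even when `c > p`, in which case they take the
simplified forms given below. -/
theorem bound_functions_are_cdfs (F : ℝ → ℝ)
    (hmono : Monotone F) (hcont : Continuous F)
    (h01 : ∀ u, F u ∈ Set.Icc (0:ℝ) 1)
    (hbot : Tendsto F atBot (nhds 0)) (htop : Tendsto F atTop (nhds 1))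
    (p : ℝ) (hp : p ∈ Set.Ioo (0:ℝ) 1) (c : ℝ) (hc : c ∈ Set.Icc (0:ℝ) 1) :
    (Monotone (Fupper F p c) ∧ Continuous (Fupper F p c) ∧
      Tendsto (Fupper F p c) atBot (nhds 0) ∧ Tendsto (Fupper F p c) atTop (nhds 1)) ∧
    (Monotone (Flower F p c) ∧ Continuous (Flower F p c) ∧
      Tendsto (Flower F p c) atBot (nhds 0) ∧ Tendsto (Flower F p c) atTop (nhds 1)) ∧
    (p < c → ∀ u,
      Fupper F p c u = min (min ((1 + c / p) * F u) (F u / p)) 1 ∧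
      Flower F p c u = max (max ((1 + c / p) * F u - c / p) ((F u - 1) / p + 1)) 0) := by
  obtain ⟨hp0, hp1⟩ := hp
  obtain ⟨hc0, hc1⟩ := hc
  have hk0 : 0 ≤ c / p := by positivity
  have hU : Continuous (Fupper F p c) := by unfold Fupper; fun_prop
  have hL : Continuous (Flower F p c) := by unfold Flower; fun_prop
  have gU : Continuous (Fupper id p c) := by unfold Fupper; fun_prop
  have gL : Continuous (Flower id p c) := by unfold Flower; fun_prop
  have U0 : Fupper id p c 0 = 0 := by simp [Fupper]
  have hp' : 1 ≤ 1 / p := by rw [le_div_iff₀ hp0]; linarith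
  have U1 : Fupper id p c 1 = 1 := by
    have : min 1 (1 / p) = 1 := min_eq_left hp'
    simp only [Fupper, id, sub_self]
    rw [min_eq_right (zero_le_one' ℝ), mul_zero, add_zero, this, min_self]
  have L0 : Flower id p c 0 = 0 := by
    have : (0 - 1) / p + 1 ≤ 0 := by
      have : (0 - 1) / p = - (1 / p) := by ring
      linarith
    simp only [Flower, id, sub_zero]
    rw [min_eq_left (zero_le_one' ℝ), mul_zero, sub_zero, max_eq_left this, max_self]
  have L1 : Flower id p c 1 = 1 := by simp [Flower]
  refine ⟨⟨?_, hU, ?_, ?_⟩, ⟨?_, hL, ?_, ?_⟩, ?_⟩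
  · intro a b hab
    have hF := hmono hab
    unfold Fupper
    rcases le_total (c / p) 1 with h | h
    · have := (mono_aux hk0 h hF).1
      gcongr min (min ?_ ?_) _
      exact div_le_div_of_nonneg_right hF hp0.le
    · rw [upper_simp h (h01 a).2, upper_simp h (h01 b).2]
      gcongr
  · have := (gU.tendsto 0).comp hbot
    rwa [U0] at this
  · have := (gU.tendsto 1).comp htop
    rwa [U1] at this
  · intro a b hab
    have hF := hmono hab
    unfold Flower
    rcases le_total (c / p) 1 with h | h
    · have := (mono_aux hk0 h hF).2
      gcongr max (max ?_ ?_) _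
      gcongr
    · rw [lower_simp h (h01 a).1, lower_simp h (h01 b).1]
      gcongr
  · have := (gL.tendsto 0).comp hbot
    rwa [L0] at this
  · have := (gL.tendsto 1).comp htop
    rwa [L1] at this
  · intro hpc u
    have h : 1 ≤ c / p := by rw [le_div_iff₀ hp0]; linarith
    exact ⟨upper_simp h (h01 u).2, lower_simp h (h01 u).1⟩
end
end

section
/- Let μ be a Borel probability measure on ℝ with continuous cdf F_U, let p_1 ∈ (0,1), c ∈ [0,1], and ε ∈ [0,1]. Then there exists a probability measure ν on ℝ × {0,1} whose first marginal is μ, which satisfies ν(ℝ × {1}) = p_1 and the c-dependence condition (there is a measurable g : ℝ → [0,1] with ν(A × {1}) = ∫_A g dμ for all Borel A and |g(u) − p_1| ≤ c for μ-a.e. u), and such that for all u ∈ ℝ: ν((−∞,u] × {1})/p_1 = ε·F̲(u; p_1) + (1−ε)·F̄(u; p_1) and ν((−∞,u] × {0})/(1−p_1) = (1−ε)·F̲(u; 1−p_1) + ε·F̄(u; 1−p_1). -/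
open MeasureTheory Set

noncomputable section

lemma mul_Fupper (F : ℝ → ℝ) (p c u : ℝ) (hp : 0 < p) :
    Fupper F p c u = min (min (p * F u + c * min (F u) (1 - F u)) (F u)) p / p := by
  unfold Fupper
  rw [← min_div_div_right hp.le, ← min_div_div_right hp.le, div_self hp.ne']
  congr 2
  field_simp

lemma mul_Flower (F : ℝ → ℝ) (p c u : ℝ) (hp : 0 < p) :
    Flower F p c u = max (max (p * F u - c * min (F u) (1 - F u)) (F u - 1 + p)) 0 / p := by
  unfold Flower
  rw [← max_div_div_right hp.le, ← max_div_div_right hp.le, zero_div]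
  congr 2 <;> field_simp

lemma H_eq (p c x : ℝ) (hc : 0 ≤ c) (hx : 0 ≤ x) (hx1 : x ≤ 1) :
    min (min (p * x + c * min x (1 - x)) x) p
      = min (min (p + c) 1 * x) (p - max (p - c) 0 * (1 - x)) := by
  rw [mul_min_of_nonneg _ _ hc, min_mul_of_nonneg _ _ hx,
    max_mul_of_nonneg _ _ (sub_nonneg.2 hx1), ← min_sub_sub_left, ← min_add_add_left]
  have e1 : p * x + c * x = (p + c) * x := by ring
  have e2 : p * x + c * (1 - x) = p - (p - c) * (1 - x) := by ring
  rw [e1, e2, one_mul, zero_mul, sub_zero, min_assoc, min_assoc, min_assoc, min_left_comm x]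

lemma meas_le (μ : Measure ℝ) [IsProbabilityMeasure μ]
    (hFcont : Continuous fun u : ℝ => (μ (Iic u)).toReal) (t : ℝ) (h0 : 0 ≤ t) (h1 : t ≤ 1) :
    μ.real {v | (μ (Iic v)).toReal ≤ t} = t := by
  have hmono : Monotone fun u : ℝ => (μ (Iic u)).toReal := fun a b hab =>
    measureReal_mono (Iic_subset_Iic.2 hab)
  have hbot : Filter.Tendsto (fun u : ℝ => (μ (Iic u)).toReal) Filter.atBot (nhds 0) := by
    refine (ProbabilityTheory.tendsto_cdf_atBot μ).congr fun u => ?_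
    rw [ProbabilityTheory.cdf_eq_real]
    rfl
  have htop : Filter.Tendsto (fun u : ℝ => (μ (Iic u)).toReal) Filter.atTop (nhds 1) := by
    refine (ProbabilityTheory.tendsto_cdf_atTop μ).congr fun u => ?_
    rw [ProbabilityTheory.cdf_eq_real]
    rfl
  have hiv : ∀ s, 0 < s → s < 1 → ∃ v, (μ (Iic v)).toReal = s := by
    intro s hs hs1
    obtain ⟨a, ha⟩ := (hbot.eventually (gt_mem_nhds hs)).exists
    obtain ⟨b, hb⟩ := (htop.eventually (lt_mem_nhds hs1)).exists
    exact mem_range_of_exists_le_of_exists_ge hFcont ⟨a, ha.le⟩ ⟨b, hb.le⟩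
  apply le_antisymm
  · by_contra! hlt
    have hle : μ.real {v | (μ (Iic v)).toReal ≤ t} ≤ 1 := measureReal_le_one
    obtain ⟨s, hs, hs'⟩ := exists_between hlt
    obtain ⟨v, hv⟩ := hiv s (by linarith) (by linarith)
    have : μ.real {v | (μ (Iic v)).toReal ≤ t} ≤ μ.real (Iic v) := by
      refine measureReal_mono ?_
      intro w hw
      by_contra hwv
      have := hmono (le_of_lt (not_le.1 hwv))
      simp only [mem_ofPred_eq] at hw this
      linarith
    rw [Measure.real, Measure.real] at *
    linarith
  · by_contra! hlt
    have hge : 0 ≤ μ.real {v | (μ (Iic v)).toReal ≤ t} := measureReal_nonneg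
    obtain ⟨s, hs, hs'⟩ := exists_between hlt
    obtain ⟨v, hv⟩ := hiv s (by linarith) (by linarith)
    have : μ.real (Iic v) ≤ μ.real {v | (μ (Iic v)).toReal ≤ t} := by
      refine measureReal_mono ?_
      intro w hw
      have := hmono (show w ≤ v from hw)
      simp only [mem_ofPred_eq] at this ⊢
      linarith
    rw [Measure.real, Measure.real] at *
    linarith

lemma meas_inter (μ : Measure ℝ) [IsProbabilityMeasure μ]
    (hFcont : Continuous fun u : ℝ => (μ (Iic u)).toReal) (t : ℝ) (h0 : 0 ≤ t) (h1 : t ≤ 1)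
    (u : ℝ) :
    μ.real (Iic u ∩ {v | (μ (Iic v)).toReal ≤ t}) = min (μ (Iic u)).toReal t := by
  have hmono : Monotone fun u : ℝ => (μ (Iic u)).toReal := fun a b hab =>
    measureReal_mono (Iic_subset_Iic.2 hab)
  rcases le_or_gt (μ (Iic u)).toReal t with h | h
  · rw [min_eq_left h, inter_eq_left.2]
    · rfl
    · intro w hw
      exact (hmono (show w ≤ u from hw)).trans h
  · rw [min_eq_right h.le, inter_eq_right.2, meas_le μ hFcont t h0 h1]
    intro w hw
    by_contra hwv
    have := hmono (le_of_lt (not_le.1 hwv))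
    simp only [mem_ofPred_eq] at hw this
    linarith

/-- Joint law built from the propensity `g`. -/
def jointLaw (μ : Measure ℝ) (g : ℝ → ℝ) : Measure (ℝ × ℕ) :=
  (μ.withDensity (fun u => ENNReal.ofReal (g u))).map (fun u => (u, 1))
   + (μ.withDensity (fun u => ENNReal.ofReal (1 - g u))).map (fun u => (u, 0))

lemma jointLaw_fst (μ : Measure ℝ) (g : ℝ → ℝ) (hg : Measurable g)
    (hg01 : ∀ u, 0 ≤ g u ∧ g u ≤ 1) : (jointLaw μ g).map Prod.fst = μ := by
  unfold jointLaw
  rw [Measure.map_add _ _ measurable_fst, Measure.map_map measurable_fst (by fun_prop),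
    Measure.map_map measurable_fst (by fun_prop)]
  have e1 : (Prod.fst ∘ fun u : ℝ => (u, 1)) = (id : ℝ → ℝ) := rfl
  have e0 : (Prod.fst ∘ fun u : ℝ => (u, 0)) = (id : ℝ → ℝ) := rfl
  change Measure.map id _ + Measure.map id _ = _
  rw [Measure.map_id, Measure.map_id, ← withDensity_add_left (by fun_prop)]
  have : ((fun u => ENNReal.ofReal (g u)) + fun u => ENNReal.ofReal (1 - g u)) = 1 := by
    funext u
    simp only [Pi.add_apply, Pi.one_apply]
    rw [← ENNReal.ofReal_add (hg01 u).1 (by linarith [(hg01 u).2])]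
    simp
  rw [this, withDensity_one]

lemma jointLaw_one (μ : Measure ℝ) [IsProbabilityMeasure μ] (g : ℝ → ℝ) (hg : Measurable g)
    (hg01 : ∀ u, 0 ≤ g u ∧ g u ≤ 1) (A : Set ℝ) (hA : MeasurableSet A) :
    (jointLaw μ g (A ×ˢ ({1} : Set ℕ))).toReal = ∫ u in A, g u ∂μ := by
  have hm : MeasurableSet (A ×ˢ ({1} : Set ℕ)) := hA.prod (measurableSet_singleton 1)
  unfold jointLaw
  rw [Measure.add_apply, Measure.map_apply (by fun_prop) hm, Measure.map_apply (by fun_prop) hm]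
  have e1 : (fun u : ℝ => (u, 1)) ⁻¹' (A ×ˢ ({1} : Set ℕ)) = A := by ext; simp
  have e0 : (fun u : ℝ => (u, 0)) ⁻¹' (A ×ˢ ({1} : Set ℕ)) = ∅ := by ext; simp
  rw [e1, e0, measure_empty, add_zero, withDensity_apply _ hA,
    integral_eq_lintegral_of_nonneg_ae (Filter.Eventually.of_forall fun u => (hg01 u).1)
      hg.aestronglyMeasurable]

lemma jointLaw_zero (μ : Measure ℝ) [IsProbabilityMeasure μ] (g : ℝ → ℝ) (hg : Measurable g)
    (hg01 : ∀ u, 0 ≤ g u ∧ g u ≤ 1) (A : Set ℝ) (hA : MeasurableSet A) :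
    (jointLaw μ g (A ×ˢ ({0} : Set ℕ))).toReal = ∫ u in A, (1 - g u) ∂μ := by
  have hm : MeasurableSet (A ×ˢ ({0} : Set ℕ)) := hA.prod (measurableSet_singleton 0)
  unfold jointLaw
  rw [Measure.add_apply, Measure.map_apply (by fun_prop) hm, Measure.map_apply (by fun_prop) hm]
  have e1 : (fun u : ℝ => (u, 1)) ⁻¹' (A ×ˢ ({0} : Set ℕ)) = ∅ := by ext; simp
  have e0 : (fun u : ℝ => (u, 0)) ⁻¹' (A ×ˢ ({0} : Set ℕ)) = A := by ext; simp
  rw [e1, e0, measure_empty, zero_add, withDensity_apply _ hA,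
    integral_eq_lintegral_of_nonneg_ae
      (Filter.Eventually.of_forall fun u => sub_nonneg.2 (hg01 u).2)
      (by fun_prop)]

lemma exists_t (a b p : ℝ) (hb : b ≤ p) (ha : p ≤ a) :
    ∃ t, 0 ≤ t ∧ t ≤ 1 ∧ (a - b) * t = p - b := by
  rcases eq_or_lt_of_le (hb.trans ha) with h | h
  · exact ⟨0, le_rfl, zero_le_one, by linarith⟩
  · have : 0 < a - b := by linarith
    exact ⟨(p - b) / (a - b), div_nonneg (by linarith) this.le,
      (div_le_one this).2 (by linarith), by field_simp⟩

/-- Sharpness: for every `ε ∈ [0,1]` there is a joint distribution `ν` of `(U, X)` on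
`ℝ × {0,1}` with first marginal `μ`, `ν(ℝ × {1}) = p₁`, satisfying `c`-dependence, whose
conditional cdfs given `X = 1` and `X = 0` are the indicated convex combinations of the
bound functions. -/
theorem c_dep_cdf_bounds_sharp (μ : Measure ℝ) [IsProbabilityMeasure μ]
    (hFcont : Continuous fun u : ℝ => (μ (Iic u)).toReal)
    (p1 : ℝ) (hp1 : p1 ∈ Set.Ioo (0:ℝ) 1) (c : ℝ) (hc : c ∈ Set.Icc (0:ℝ) 1)
    (ε : ℝ) (hε : ε ∈ Set.Icc (0:ℝ) 1) :
    ∃ ν : Measure (ℝ × ℕ), IsProbabilityMeasure ν ∧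
      ν.map Prod.fst = μ ∧
      (ν (univ ×ˢ ({1} : Set ℕ))).toReal = p1 ∧
      (∃ g : ℝ → ℝ, Measurable g ∧ (∀ u, 0 ≤ g u ∧ g u ≤ 1) ∧
        (∀ A : Set ℝ, MeasurableSet A →
          (ν (A ×ˢ ({1} : Set ℕ))).toReal = ∫ u in A, g u ∂μ) ∧
        (∀ᵐ u ∂μ, |g u - p1| ≤ c)) ∧
      (∀ u : ℝ,
        (ν (Iic u ×ˢ ({1} : Set ℕ))).toReal / p1 =
          ε * Flower (fun v : ℝ => (μ (Iic v)).toReal) p1 c u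
            + (1 - ε) * Fupper (fun v : ℝ => (μ (Iic v)).toReal) p1 c u) ∧
      (∀ u : ℝ,
        (ν (Iic u ×ˢ ({0} : Set ℕ))).toReal / (1 - p1) =
          (1 - ε) * Flower (fun v : ℝ => (μ (Iic v)).toReal) (1 - p1) c u
            + ε * Fupper (fun v : ℝ => (μ (Iic v)).toReal) (1 - p1) c u) := by
  obtain ⟨hp0, hp1⟩ := hp1
  obtain ⟨hc0, hc1⟩ := hc
  obtain ⟨he0, he1⟩ := hε
  set F : ℝ → ℝ := fun u : ℝ => (μ (Iic u)).toReal with hF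
  obtain ⟨a, ha⟩ : ∃ a, a = min (p1 + c) 1 := ⟨_, rfl⟩
  obtain ⟨b, hb⟩ : ∃ b, b = max (p1 - c) 0 := ⟨_, rfl⟩
  have ha1 : a ≤ 1 := ha ▸ min_le_right _ _
  have hac : a ≤ p1 + c := ha ▸ min_le_left _ _
  have hap : p1 ≤ a := by rw [ha]; exact le_min (by linarith) hp1.le
  have hb0 : 0 ≤ b := hb ▸ le_max_right _ _
  have hbc : p1 - c ≤ b := hb ▸ le_max_left _ _
  have hbp : b ≤ p1 := by rw [hb]; exact max_le (by linarith) hp0.le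
  have hab : b ≤ a := hbp.trans hap
  obtain ⟨t, ht0, ht1, ht⟩ := exists_t a b p1 hbp hap
  have hFm : Measurable F := hFcont.measurable
  have hSm : ∀ s, MeasurableSet {v | F v ≤ s} := fun s => measurableSet_le hFm measurable_const
  let I : ℝ → ℝ → ℝ := fun s => indicator {v | F v ≤ s} (fun _ => (1:ℝ))
  have hIm : ∀ s, Measurable (I s) := fun s => measurable_const.indicator (hSm s)
  have hI01 : ∀ s u, 0 ≤ I s u ∧ I s u ≤ 1 := by
    intro s u
    simp only [I, indicator]
    split_ifs <;> norm_num
  have hIi : ∀ s, Integrable (I s) μ := fun s => (integrable_const 1).indicator (hSm s)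
  let g : ℝ → ℝ := fun u =>
    ((1 - ε) * b + ε * a) + ((1 - ε) * (a - b)) * I t u - (ε * (a - b)) * I (1 - t) u
  have hgm : Measurable g := by
    have h1 := hIm t
    have h2 := hIm (1 - t)
    fun_prop
  have hgab : ∀ u, b ≤ g u ∧ g u ≤ a := by
    intro u
    obtain ⟨h1, h2⟩ := hI01 t u
    obtain ⟨h3, h4⟩ := hI01 (1 - t) u
    have k1 : 0 ≤ (1 - ε) * (a - b) := mul_nonneg (by linarith) (by linarith)
    have k2 : 0 ≤ ε * (a - b) := mul_nonneg (by linarith) (by linarith)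
    constructor <;> simp only [g] <;> nlinarith [mul_nonneg k1 h1, mul_nonneg k2 h3,
      mul_nonneg k1 (sub_nonneg.2 h2), mul_nonneg k2 (sub_nonneg.2 h4)]
  have hg01 : ∀ u, 0 ≤ g u ∧ g u ≤ 1 := fun u =>
    ⟨hb0.trans (hgab u).1, (hgab u).2.trans ha1⟩
  have hgi : Integrable g μ :=
    ((integrable_const _).add ((hIi t).const_mul _)).sub ((hIi (1 - t)).const_mul _)
  have hint : ∀ A, MeasurableSet A → ∫ u in A, g u ∂μ = ((1 - ε) * b + ε * a) * μ.real A
      + ((1 - ε) * (a - b)) * μ.real (A ∩ {v | F v ≤ t})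
      - (ε * (a - b)) * μ.real (A ∩ {v | F v ≤ 1 - t}) := by
    intro A hA
    have hII : ∀ s, ∫ u in A, I s u ∂μ = μ.real (A ∩ {v | F v ≤ s}) := by
      intro s
      simp only [I]
      rw [setIntegral_indicator (hSm s)]
      simp
    simp only [g]
    have i1 : Integrable (fun u => ((1 - ε) * b + ε * a) + ((1 - ε) * (a - b)) * I t u) μ :=
      (integrable_const _).add ((hIi t).const_mul _)
    rw [integral_sub i1.integrableOn (((hIi (1 - t)).const_mul _).integrableOn),
      integral_add (integrable_const _) (((hIi t).const_mul _).integrableOn),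
      integral_const_mul, integral_const_mul, hII, hII]
    simp
    ring
  have hF01 : ∀ u, 0 ≤ F u ∧ F u ≤ 1 := fun u => ⟨ENNReal.toReal_nonneg, measureReal_le_one⟩
  have hH : ∀ x, 0 ≤ x → x ≤ 1 → min (min (p1 * x + c * min x (1 - x)) x) p1
      = b * x + (a - b) * min x t := by
    intro x hx hx1
    rw [H_eq p1 c x hc0 hx hx1, ← ha, ← hb, mul_min_of_nonneg _ _ (sub_nonneg.2 hab), ht, ← min_add_add_left]
    congr 1 <;> ring
  have hHm : ∀ x, min (min (p1 * (1 - x) + c * min x (1 - x)) (1 - x)) p1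
      = p1 - max (max (p1 * x - c * min x (1 - x)) (x - 1 + p1)) 0 := by
    intro x
    rw [← min_sub_sub_left, ← min_sub_sub_left]
    congr 2 <;> ring
  have hL : ∀ x, 0 ≤ x → x ≤ 1 → max (max (p1 * x - c * min x (1 - x)) (x - 1 + p1)) 0
      = a * x - (a - b) * min x (1 - t) := by
    intro x hx hx1
    have h1 := hH (1 - x) (by linarith) (by linarith)
    rw [sub_sub_cancel, min_comm (1 - x) x, hHm] at h1
    have h2 : min (1 - x) t = (1 - t) - x + t - ((1 - t) - min x (1 - t)) := by
      rcases le_total x (1 - t) with h | h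
      · rw [min_eq_left h, min_eq_right (by linarith)]; ring
      · rw [min_eq_right h, min_eq_left (by linarith)]; ring
    rw [h2] at h1
    linear_combination -h1 - ht
  have hIic : ∀ u, ∫ v in Iic u, g v ∂μ =
      ε * (a * F u - (a - b) * min (F u) (1 - t)) + (1 - ε) * (b * F u + (a - b) * min (F u) t) := by
    intro u
    rw [hint _ measurableSet_Iic, meas_inter μ hFcont t ht0 ht1,
      meas_inter μ hFcont (1 - t) (by linarith) (by linarith)]
    change _ * F u + _ * min (F u) t - _ * min (F u) (1 - t) = _
    ring
  have hfst := jointLaw_fst μ g hgm hg01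
  refine ⟨jointLaw μ g, ?_, hfst, ?_, ⟨g, hgm, hg01, jointLaw_one μ g hgm hg01, ?_⟩, ?_, ?_⟩
  · constructor
    have := congrArg (fun m => m univ) hfst
    simpa [Measure.map_apply measurable_fst MeasurableSet.univ] using this
  · rw [jointLaw_one μ g hgm hg01 _ MeasurableSet.univ, hint _ MeasurableSet.univ, univ_inter,
      univ_inter, meas_le μ hFcont t ht0 ht1, meas_le μ hFcont (1 - t) (by linarith) (by linarith)]
    simp
    linear_combination ht
  · refine Filter.Eventually.of_forall fun u => ?_
    rw [abs_le]
    constructor <;> linarith [(hgab u).1, (hgab u).2]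
  · intro u
    rw [jointLaw_one μ g hgm hg01 _ measurableSet_Iic, hIic, mul_Fupper _ _ _ _ hp0,
      mul_Flower _ _ _ _ hp0, hH _ (hF01 u).1 (hF01 u).2, hL _ (hF01 u).1 (hF01 u).2]
    ring
  · intro u
    have hq : 0 < 1 - p1 := by linarith
    obtain ⟨x, hx⟩ : ∃ x, x = F u := ⟨_, rfl⟩
    have e1 : max (max ((1 - p1) * F u - c * min (F u) (1 - F u)) (F u - 1 + (1 - p1))) 0
        = F u - (b * F u + (a - b) * min (F u) t) := by
      rw [← hH _ (hF01 u).1 (hF01 u).2, ← hx, ← max_sub_sub_left, ← max_sub_sub_left, sub_self, max_right_comm]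
      refine congrArg₂ max (congrArg₂ max ?_ ?_) ?_ <;> ring
    have e2 : min (min ((1 - p1) * F u + c * min (F u) (1 - F u)) (F u)) (1 - p1)
        = F u - (a * F u - (a - b) * min (F u) (1 - t)) := by
      rw [← hL _ (hF01 u).1 (hF01 u).2, ← hx, ← min_sub_sub_left, ← min_sub_sub_left, sub_zero, min_right_comm]
      refine congrArg₂ min (congrArg₂ min ?_ ?_) ?_ <;> ring
    rw [jointLaw_zero μ g hgm hg01 _ measurableSet_Iic,
      integral_sub (integrable_const _) hgi.integrableOn, hIic, mul_Fupper _ _ _ _ hq,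
      mul_Flower _ _ _ _ hq, e1, e2]
    have : ∫ v in Iic u, (1:ℝ) ∂μ = F u := by simp [hF, Measure.real]
    rw [this]
    ring
end
end

section
/- Let μ be a Borel probability measure on ℝ with continuous cdf F_U, let p ∈ (0,1) and c ∈ (0,1]. Set d = min{c, 1−p} / (min{p + c, 1} − max{p − c, 0}); then d ∈ (0,1), so by the intermediate value theorem there exists u* ∈ ℝ with F_U(u*) = d. Define P̲(u) = max{p − c, 0} for u ≤ u* and P̲(u) = min{p + c, 1} for u > u*. Then ∫_ℝ P̲(u) dμ(u) = p. -/
open MeasureTheory Set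

noncomputable section

/-- The extreme treatment-assignment probability `P̲` integrates to `p`: with
`d = min{c, 1-p} / (min{p+c,1} - max{p-c,0}) ∈ (0,1)` and any `u*` with `F_U(u*) = d`
(such `u*` exists by the intermediate value theorem), the function equal to
`max{p-c, 0}` for `u ≤ u*` and `min{p+c, 1}` for `u > u*` integrates to `p` under `μ`. -/
theorem extreme_propensity_integrates_to_p (μ : Measure ℝ) [IsProbabilityMeasure μ]
    (hFcont : Continuous fun u : ℝ => (μ (Iic u)).toReal)
    (p c : ℝ) (hp : p ∈ Set.Ioo (0:ℝ) 1) (hc : c ∈ Set.Ioc (0:ℝ) 1) :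
    min c (1 - p) / (min (p + c) 1 - max (p - c) 0) ∈ Set.Ioo (0:ℝ) 1 ∧
    ∀ ustar : ℝ,
      (μ (Iic ustar)).toReal = min c (1 - p) / (min (p + c) 1 - max (p - c) 0) →
      ∫ u, (if u ≤ ustar then max (p - c) 0 else min (p + c) 1) ∂μ = p := by
  obtain ⟨hp0, hp1⟩ := hp
  obtain ⟨hc0, hc1⟩ := hc
  have ha : 0 < min c (1 - p) := lt_min hc0 (by linarith)
  have hb : 0 < min c p := lt_min hc0 hp0
  have e1 : min (p + c) 1 = p + min c (1 - p) := by grind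
  have e2 : max (p - c) 0 = p - min c p := by grind
  rw [e1, e2]
  generalize min c (1 - p) = a at *
  generalize min c p = b at *
  have e3 : p + a - (p - b) = a + b := by ring
  rw [e3]
  have hab : 0 < a + b := by linarith
  refine ⟨⟨by positivity, by rw [div_lt_one hab]; linarith⟩, ?_⟩
  intro ustar h
  have hfun : (fun u : ℝ => if u ≤ ustar then p - b else p + a)
      = fun u => (p + a) - (Iic ustar).indicator (fun _ => a + b) u := by
    funext u
    by_cases hu : u ≤ ustar
    · simp [hu]; ring
    · simp [hu]
  rw [hfun, integral_sub (integrable_const _)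
    ((integrable_const _).indicator measurableSet_Iic),
    integral_indicator_const _ measurableSet_Iic]
  simp only [integral_const, probReal_univ, smul_eq_mul, measureReal_def, h]
  field_simp
  simp
end
end

section
/- Assume the potential outcomes setup and suppose X is c-dependent with Y_x for a given x ∈ {0,1} and c ∈ [0,1]. Then for every y ∈ [y̲_x, ȳ_x), P(Y_x ≤ y) ≤ min{ (p_x F_{Y|X}(y|x)/(p_x − c))·1(p_x > c) + 1(p_x ≤ c), (p_x F_{Y|X}(y|x) + c)/(p_x + c), p_x F_{Y|X}(y|x) + (1 − p_x) }. -/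
open MeasureTheory Set

noncomputable section

/-- `P(X = x)`. -/
def px {Ω : Type*} [MeasurableSpace Ω] (P : Measure Ω) (X : Ω → ℕ) (x : ℕ) : ℝ :=
  (P {ω | X ω = x}).toReal

/-- The conditional cdf `y ↦ P(V ≤ y ∣ X = x)`. -/
def condCDF' {Ω : Type*} [MeasurableSpace Ω] (P : Measure Ω) (X : Ω → ℕ) (V : Ω → ℝ)
    (x : ℕ) (y : ℝ) : ℝ :=
  (P ({ω | V ω ≤ y} ∩ {ω | X ω = x})).toReal / (P {ω | X ω = x}).toReal

theorem aux_bound {Ω : Type*} [MeasurableSpace Ω] (P : Measure Ω) [IsProbabilityMeasure P]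
    (X : Ω → ℕ) (V : Ω → ℝ) (c : ℝ) (hV : Measurable V) (h : CDep P X V c)
    (A : Set ℝ) (hA : MeasurableSet A) :
    (px P X 1 - c) * P.real (V ⁻¹' A) ≤ P.real ({ω | X ω = 1} ∩ V ⁻¹' A) ∧
    P.real ({ω | X ω = 1} ∩ V ⁻¹' A) ≤ (px P X 1 + c) * P.real (V ⁻¹' A) := by
  obtain ⟨g, hg, hg01, hint, hae⟩ := h
  haveI : IsProbabilityMeasure (Measure.map V P) :=
    Measure.isProbabilityMeasure_map hV.aemeasurable
  have hi : Integrable g (Measure.map V P) :=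
    Integrable.of_bound hg.aestronglyMeasurable 1 (Filter.Eventually.of_forall fun v => by
      rw [Real.norm_eq_abs, abs_of_nonneg (hg01 v).1]; exact (hg01 v).2)
  have e : P.real ({ω | X ω = 1} ∩ V ⁻¹' A) = ∫ v in A, g v ∂(Measure.map V P) := hint A hA
  have hm : (Measure.map V P).real A = P.real (V ⁻¹' A) := map_measureReal_apply hV hA
  have hk : ∀ k : ℝ, ∫ v in A, k ∂(Measure.map V P) = k * P.real (V ⁻¹' A) := by
    intro k
    rw [setIntegral_const, hm, smul_eq_mul, mul_comm]
  rw [e, ← hk, ← hk]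
  constructor
  · apply setIntegral_mono_ae (integrable_const _).integrableOn hi.integrableOn
    filter_upwards [hae] with v hv
    have := (abs_le.1 hv).1
    unfold px
    linarith
  · apply setIntegral_mono_ae hi.integrableOn (integrable_const _).integrableOn
    filter_upwards [hae] with v hv
    have := (abs_le.1 hv).2
    unfold px
    linarith

/-- Upper bound on the cdf of the potential outcome `Y_x` under `c`-dependence:
for `y ∈ [y̲_x, ȳ_x)`,
`P(Y_x ≤ y) ≤ min{ (p_x F(y|x)/(p_x-c))1(p_x>c)+1(p_x≤c), (p_x F(y|x)+c)/(p_x+c),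
p_x F(y|x) + (1-p_x) }`. -/
theorem potential_outcome_cdf_upper_bound {Ω : Type*} [MeasurableSpace Ω]
    (P : Measure Ω) [IsProbabilityMeasure P]
    (Yv : ℕ → Ω → ℝ) (X : Ω → ℕ) (Y : Ω → ℝ)
    (hYm : ∀ x, Measurable (Yv x)) (hXm : Measurable X)
    (hX01 : ∀ ω, X ω ≤ 1)
    (hY : ∀ ω, Y ω = Yv (X ω) ω)
    (hp1 : px P X 1 ∈ Set.Ioo (0:ℝ) 1)
    (lo hi : ℕ → EReal) (hlh : ∀ x ≤ 1, lo x < hi x)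
    (hcont : ∀ x ≤ 1, ∀ x' ≤ 1, Continuous (condCDF' P X (Yv x) x'))
    (hmono : ∀ x ≤ 1, ∀ x' ≤ 1, StrictMonoOn (condCDF' P X (Yv x) x')
      {y : ℝ | lo x ≤ (y : EReal) ∧ (y : EReal) ≤ hi x})
    (hsupp : ∀ x ≤ 1, ∀ x' ≤ 1, ∀ y : ℝ,
      ((y : EReal) ≤ lo x → condCDF' P X (Yv x) x' y = 0) ∧
      (hi x ≤ (y : EReal) → condCDF' P X (Yv x) x' y = 1))
    (x : ℕ) (hx : x ≤ 1) (c : ℝ) (hc : c ∈ Set.Icc (0:ℝ) 1)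
    (hdep : CDep P X (Yv x) c) :
    ∀ y : ℝ, lo x ≤ (y : EReal) → (y : EReal) < hi x →
      (P {ω | Yv x ω ≤ y}).toReal ≤
        min (min
            (if c < px P X x then px P X x * condCDF' P X Y x y / (px P X x - c) else 1)
            ((px P X x * condCDF' P X Y x y + c) / (px P X x + c)))
          (px P X x * condCDF' P X Y x y + (1 - px P X x)) := by
  intro y _ _
  have hS : MeasurableSet {ω | Yv x ω ≤ y} := hYm x measurableSet_Iic
  have hX1 : MeasurableSet {ω | X ω = 1} := hXm (measurableSet_singleton 1)
  have b1 := aux_bound P X (Yv x) c (hYm x) hdep (Iic y) measurableSet_Iic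
  have b2 := aux_bound P X (Yv x) c (hYm x) hdep (Iic y)ᶜ measurableSet_Iic.compl
  have hpre : Yv x ⁻¹' (Iic y) = {ω | Yv x ω ≤ y} := rfl
  rw [preimage_compl, hpre, ← diff_eq, probReal_compl_eq_one_sub hS] at b2
  rw [hpre] at b1
  have s1 : P.real ({ω | X ω = 1} ∩ {ω | Yv x ω ≤ y}) +
      P.real ({ω | X ω = 1} \ {ω | Yv x ω ≤ y}) = px P X 1 :=
    measureReal_inter_add_diff hS
  have hc0 : {ω | X ω = 1}ᶜ = {ω | X ω = 0} := by
    ext ω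
    have := hX01 ω
    simp only [mem_compl_iff, mem_setOf_eq]
    omega
  have s2 : px P X 0 = 1 - px P X 1 := by
    change P.real _ = 1 - P.real _
    rw [← hc0, probReal_compl_eq_one_sub hX1]
  have s3 : P.real ({ω | Yv x ω ≤ y} ∩ {ω | X ω = 1}) +
      P.real ({ω | Yv x ω ≤ y} \ {ω | X ω = 1}) = P.real {ω | Yv x ω ≤ y} :=
    measureReal_inter_add_diff hX1
  rw [diff_eq, hc0] at s3
  rw [inter_comm] at b1 s1
  have n1 : 0 ≤ P.real ({ω | X ω = 1} \ {ω | Yv x ω ≤ y}) := measureReal_nonneg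
  have n2 : P.real ({ω | Yv x ω ≤ y} ∩ {ω | X ω = 0}) ≤ px P X 0 :=
    measureReal_mono inter_subset_right
  have n3 : P.real {ω | Yv x ω ≤ y} ≤ 1 := measureReal_le_one
  have hp : 0 < px P X x := by
    interval_cases x
    · rw [s2]; linarith [hp1.2]
    · exact hp1.1
  have hq : px P X x * condCDF' P X Y x y = P.real ({ω | Yv x ω ≤ y} ∩ {ω | X ω = x}) := by
    have hs : {ω | Y ω ≤ y} ∩ {ω | X ω = x} = {ω | Yv x ω ≤ y} ∩ {ω | X ω = x} := by
      ext ω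
      simp only [mem_inter_iff, mem_setOf_eq, hY]
      constructor
      · rintro ⟨h, rfl⟩; exact ⟨h, rfl⟩
      · rintro ⟨h, rfl⟩; exact ⟨h, rfl⟩
    unfold condCDF'
    rw [hs]
    exact mul_div_cancel₀ _ hp.ne'
  rw [hq]
  change P.real _ ≤ _
  have hc := hc.1
  have key : (px P X x - c) * P.real {ω | Yv x ω ≤ y}
        ≤ P.real ({ω | Yv x ω ≤ y} ∩ {ω | X ω = x}) ∧
      P.real {ω | Yv x ω ≤ y} * (px P X x + c)
        ≤ P.real ({ω | Yv x ω ≤ y} ∩ {ω | X ω = x}) + c ∧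
      P.real {ω | Yv x ω ≤ y}
        ≤ P.real ({ω | Yv x ω ≤ y} ∩ {ω | X ω = x}) + (1 - px P X x) := by
    obtain ⟨b11, b12⟩ := b1
    obtain ⟨b21, b22⟩ := b2
    have hx' : x = 0 ∨ x = 1 := by omega
    rcases hx' with h | h
    · have e1 : px P X x = px P X 0 := by rw [h]
      have e2 : P.real ({ω | Yv x ω ≤ y} ∩ {ω | X ω = x})
          = P.real ({ω | Yv x ω ≤ y} ∩ {ω | X ω = 0}) := by
        conv_lhs => rw [show {ω | X ω = x} = {ω | X ω = 0} by rw [h]]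
      rw [e1, e2, s2]
      refine ⟨?_, ?_, ?_⟩ <;> nlinarith
    · have e1 : px P X x = px P X 1 := by rw [h]
      have e2 : P.real ({ω | Yv x ω ≤ y} ∩ {ω | X ω = x})
          = P.real ({ω | Yv x ω ≤ y} ∩ {ω | X ω = 1}) := by
        conv_lhs => rw [show {ω | X ω = x} = {ω | X ω = 1} by rw [h]]
      rw [e1, e2]
      refine ⟨?_, ?_, ?_⟩ <;> nlinarith
  refine le_min (le_min ?_ ?_) key.2.2
  · split_ifs with h
    · rw [le_div_iff₀ (by linarith), mul_comm]
      exact key.1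
    · exact n3
  · rw [le_div_iff₀ (by linarith)]
    exact key.2.1
end
end

section
/- Assume the potential outcomes setup and suppose X is c-dependent with Y_x for a given x ∈ {0,1} and c ∈ [0,1]. Then for every y ∈ [y̲_x, ȳ_x), P(Y_x ≤ y) ≥ max{ p_x F_{Y|X}(y|x)/(p_x + c), ((p_x F_{Y|X}(y|x) − c)/(p_x − c))·1(p_x > c), p_x F_{Y|X}(y|x) }. -/
open MeasureTheory Set

noncomputable section

/-- Under `c`-dependence the conditional probability is within `c` of `p_1`. -/
theorem cdep_one {Ω : Type*} [MeasurableSpace Ω]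
    (P : Measure Ω) [IsProbabilityMeasure P] (X : Ω → ℕ) (V : Ω → ℝ)
    (hV : Measurable V) (c : ℝ) (h : CDep P X V c) (A : Set ℝ) (hA : MeasurableSet A) :
    (px P X 1 - c) * P.real (V ⁻¹' A) ≤ P.real ({ω | X ω = 1} ∩ V ⁻¹' A) ∧
    P.real ({ω | X ω = 1} ∩ V ⁻¹' A) ≤ (px P X 1 + c) * P.real (V ⁻¹' A) := by
  obtain ⟨g, hg, hg01, hint, hb⟩ := h
  have : IsProbabilityMeasure (Measure.map V P) :=
    Measure.isProbabilityMeasure_map hV.aemeasurable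
  have e := hint A hA
  have hgi : Integrable g (Measure.map V P) :=
    Integrable.of_bound hg.aestronglyMeasurable 1 (Filter.Eventually.of_forall fun v => by
      rw [Real.norm_eq_abs, abs_le]; constructor <;> linarith [hg01 v])
  have hk : ∀ k : ℝ, ∫ _ in A, k ∂(Measure.map V P) = k * P.real (V ⁻¹' A) := by
    intro k
    rw [setIntegral_const, map_measureReal_apply hV hA, smul_eq_mul, mul_comm]
  change P.real ({ω | X ω = 1} ∩ V ⁻¹' A) = _ at e
  rw [e, ← hk, ← hk]
  constructor
  · refine integral_mono_ae (integrable_const _) hgi.integrableOn (ae_restrict_of_ae ?_)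
    filter_upwards [hb] with v hv
    rw [abs_le] at hv
    unfold px
    linarith [hv.1]
  · refine integral_mono_ae hgi.integrableOn (integrable_const _) (ae_restrict_of_ae ?_)
    filter_upwards [hb] with v hv
    rw [abs_le] at hv
    unfold px
    linarith [hv.2]

theorem px_split {Ω : Type*} [MeasurableSpace Ω]
    (P : Measure Ω) [IsProbabilityMeasure P] (X : Ω → ℕ) (hXm : Measurable X)
    (hX01 : ∀ ω, X ω ≤ 1) (B : Set Ω) :
    P.real ({ω | X ω = 1} ∩ B) + P.real ({ω | X ω = 0} ∩ B) = P.real B := by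
  have hm : MeasurableSet {ω | X ω = 1} := hXm (measurableSet_singleton 1)
  have := measureReal_inter_add_sdiff (μ := P) (s := B) hm
  rw [← this, inter_comm B]
  congr 2
  ext ω
  have := hX01 ω
  simp only [mem_inter_iff, mem_ofPred_eq, mem_sdiff]
  constructor
  · rintro ⟨h, h'⟩; exact ⟨h', by omega⟩
  · rintro ⟨h, h'⟩; exact ⟨by omega, h⟩

theorem cdep_all {Ω : Type*} [MeasurableSpace Ω]
    (P : Measure Ω) [IsProbabilityMeasure P] (X : Ω → ℕ) (hXm : Measurable X)
    (hX01 : ∀ ω, X ω ≤ 1) (V : Ω → ℝ)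
    (hV : Measurable V) (c : ℝ) (h : CDep P X V c) (A : Set ℝ) (hA : MeasurableSet A)
    (x : ℕ) (hx : x ≤ 1) :
    (px P X x - c) * P.real (V ⁻¹' A) ≤ P.real ({ω | X ω = x} ∩ V ⁻¹' A) ∧
    P.real ({ω | X ω = x} ∩ V ⁻¹' A) ≤ (px P X x + c) * P.real (V ⁻¹' A) := by
  obtain ⟨h1, h2⟩ := cdep_one P X V hV c h A hA
  have e1 := px_split P X hXm hX01 (V ⁻¹' A)
  have e2 := px_split P X hXm hX01 univ
  simp only [inter_univ, probReal_univ] at e2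
  change px P X 1 + px P X 0 = 1 at e2
  have e3 : px P X 0 = 1 - px P X 1 := by linarith
  interval_cases x
  · rw [e3]
    constructor <;> nlinarith
  · exact ⟨h1, h2⟩

/-- Lower bound on the cdf of the potential outcome `Y_x` under `c`-dependence:
for `y ∈ [y̲_x, ȳ_x)`,
`P(Y_x ≤ y) ≥ max{ p_x F(y|x)/(p_x+c), ((p_x F(y|x)-c)/(p_x-c))1(p_x>c),
p_x F(y|x) }`. -/
theorem potential_outcome_cdf_lower_bound {Ω : Type*} [MeasurableSpace Ω]
    (P : Measure Ω) [IsProbabilityMeasure P]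
    (Yv : ℕ → Ω → ℝ) (X : Ω → ℕ) (Y : Ω → ℝ)
    (hYm : ∀ x, Measurable (Yv x)) (hXm : Measurable X)
    (hX01 : ∀ ω, X ω ≤ 1)
    (hY : ∀ ω, Y ω = Yv (X ω) ω)
    (hp1 : px P X 1 ∈ Set.Ioo (0:ℝ) 1)
    (lo hi : ℕ → EReal) (hlh : ∀ x ≤ 1, lo x < hi x)
    (hcont : ∀ x ≤ 1, ∀ x' ≤ 1, Continuous (condCDF' P X (Yv x) x'))
    (hmono : ∀ x ≤ 1, ∀ x' ≤ 1, StrictMonoOn (condCDF' P X (Yv x) x')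
      {y : ℝ | lo x ≤ (y : EReal) ∧ (y : EReal) ≤ hi x})
    (hsupp : ∀ x ≤ 1, ∀ x' ≤ 1, ∀ y : ℝ,
      ((y : EReal) ≤ lo x → condCDF' P X (Yv x) x' y = 0) ∧
      (hi x ≤ (y : EReal) → condCDF' P X (Yv x) x' y = 1))
    (x : ℕ) (hx : x ≤ 1) (c : ℝ) (hc : c ∈ Set.Icc (0:ℝ) 1)
    (hdep : CDep P X (Yv x) c) :
    ∀ y : ℝ, lo x ≤ (y : EReal) → (y : EReal) < hi x →
      max (max
            (px P X x * condCDF' P X Y x y / (px P X x + c))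
            (if c < px P X x then (px P X x * condCDF' P X Y x y - c) / (px P X x - c)
              else 0))
          (px P X x * condCDF' P X Y x y) ≤
        (P {ω | Yv x ω ≤ y}).toReal := by
  intro y _ _
  have e2 := px_split P X hXm hX01 univ
  simp only [inter_univ, probReal_univ] at e2
  change px P X 1 + px P X 0 = 1 at e2
  have hp : 0 < px P X x := by
    obtain ⟨ha, hb⟩ := hp1
    interval_cases x <;> linarith
  have hset : {ω | Y ω ≤ y} ∩ {ω | X ω = x} = {ω | X ω = x} ∩ Yv x ⁻¹' Iic y := by
    ext ω
    simp only [mem_inter_iff, mem_ofPred_eq, mem_preimage, mem_Iic, hY]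
    constructor
    · rintro ⟨h, h'⟩; subst h'; exact ⟨rfl, h⟩
    · rintro ⟨h, h'⟩; subst h; exact ⟨h', rfl⟩
  have ha : px P X x * condCDF' P X Y x y = P.real ({ω | X ω = x} ∩ Yv x ⁻¹' Iic y) := by
    unfold condCDF'
    rw [hset]
    exact mul_div_cancel₀ _ hp.ne'
  rw [ha]
  change _ ≤ P.real (Yv x ⁻¹' Iic y)
  obtain ⟨_, h2⟩ := cdep_all P X hXm hX01 (Yv x) (hYm x) c hdep (Iic y) measurableSet_Iic x hx
  obtain ⟨h3, _⟩ := cdep_all P X hXm hX01 (Yv x) (hYm x) c hdep (Iic y)ᶜ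
    measurableSet_Iic.compl x hx
  have hmB : MeasurableSet (Yv x ⁻¹' Iic y) := hYm x measurableSet_Iic
  have hcompl : P.real (Yv x ⁻¹' (Iic y)ᶜ) = 1 - P.real (Yv x ⁻¹' Iic y) := by
    rw [preimage_compl, probReal_compl_eq_one_sub hmB]
  have hsum := measureReal_inter_add_sdiff (μ := P) (s := {ω | X ω = x}) hmB
  rw [sdiff_eq, ← preimage_compl] at hsum
  change _ = px P X x at hsum
  change _ + P.real ({ω | X ω = x} ∩ Yv x ⁻¹' (Iic y)ᶜ) = _ at hsum
  rw [hcompl] at h3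
  refine max_le (max_le ?_ ?_) (measureReal_mono inter_subset_right)
  · rw [div_le_iff₀ (by linarith [hc.1])]
    linarith
  · split_ifs with hcp
    · rw [div_le_iff₀ (by linarith)]
      nlinarith
    · exact measureReal_nonneg
end
end

section
/- Fix x ∈ {0,1}, a continuous strictly increasing cdf G on an interval [a, b] (with −∞ ≤ a < b ≤ ∞), p_x ∈ (0,1), c ∈ (0,1], a point y ∈ (a, b), and a number e with max{ p_x G(y)/(p_x + c), ((p_x G(y) − c)/(p_x − c))·1(p_x > c), p_x G(y) } < e < min{ (p_x G(y)/(p_x − c))·1(p_x > c) + 1(p_x ≤ c), (p_x G(y) + c)/(p_x + c), p_x G(y) + (1 − p_x) }. Then there exist, on some probability space, a real random variable V and a {0,1}-valued random variable X such that: P(X = x) = p_x; P(V ≤ y' | X = x) = G(y') for all y'; for each x' ∈ {0,1} the conditional cdf of V given X = x' is continuous and strictly increasing on its support and supp(V | X = x') = supp(V) = [a, b]; X is c-dependent with V; and P(V ≤ y) = e. -/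
open MeasureTheory Set

noncomputable section

/-- Two-piece reweighting of `μ` around `y`. -/
def pieceM (μ : Measure ℝ) (y u v : ℝ) : Measure ℝ :=
  ENNReal.ofReal u • μ.restrict (Iic y) + ENNReal.ofReal v • μ.restrict (Ioi y)

instance pieceM_fin (μ : Measure ℝ) [IsFiniteMeasure μ] (y u v : ℝ) :
    IsFiniteMeasure (pieceM μ y u v) := by
  have h1 : IsFiniteMeasure (ENNReal.ofReal u • μ.restrict (Iic y)) :=
    Measure.smul_finite _ ENNReal.ofReal_ne_top
  have h2 : IsFiniteMeasure (ENNReal.ofReal v • μ.restrict (Ioi y)) :=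
    Measure.smul_finite _ ENNReal.ofReal_ne_top
  unfold pieceM
  infer_instance

lemma pieceM_apply (μ : Measure ℝ) [IsFiniteMeasure μ] (y u v : ℝ) (hu : 0 ≤ u) (hv : 0 ≤ v)
    (A : Set ℝ) (hA : MeasurableSet A) :
    (pieceM μ y u v A).toReal =
      u * (μ (A ∩ Iic y)).toReal + v * (μ (A ∩ Ioi y)).toReal := by
  unfold pieceM
  simp only [Measure.add_apply, Measure.smul_apply, smul_eq_mul, Measure.restrict_apply hA]
  rw [ENNReal.toReal_add (ENNReal.mul_ne_top ENNReal.ofReal_ne_top (measure_ne_top _ _))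
    (ENNReal.mul_ne_top ENNReal.ofReal_ne_top (measure_ne_top _ _)),
    ENNReal.toReal_mul, ENNReal.toReal_mul, ENNReal.toReal_ofReal hu, ENNReal.toReal_ofReal hv]

lemma pieceM_Iic (μ : Measure ℝ) [IsFiniteMeasure μ] (G : ℝ → ℝ)
    (hμ : ∀ z, (μ (Iic z)).toReal = G z)
    (y u v : ℝ) (hu : 0 ≤ u) (hv : 0 ≤ v) (z : ℝ) :
    (pieceM μ y u v (Iic z)).toReal = u * G (min z y) + v * (G (max z y) - G y) := by
  rw [pieceM_apply μ y u v hu hv _ measurableSet_Iic, Iic_inter_Iic, hμ]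
  have h : Iic (max z y) = Iic y ∪ (Iic z ∩ Ioi y) := by
    ext t
    simp only [mem_Iic, le_max_iff, mem_union, mem_inter_iff, mem_Ioi]
    constructor
    · rintro (h | h)
      · rcases le_or_gt t y with h' | h'
        · exact Or.inl h'
        · exact Or.inr ⟨h, h'⟩
      · exact Or.inl h
    · rintro (h | h)
      · exact Or.inr h
      · exact Or.inl h.1
  have hd : Disjoint (Iic y) (Iic z ∩ Ioi y) := by
    rw [Set.disjoint_left]
    intro t ht ht'
    exact (not_lt.mpr (mem_Iic.mp ht)) (mem_Ioi.mp ht'.2)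
  have h2 : G (max z y) = G y + (μ (Iic z ∩ Ioi y)).toReal := by
    rw [← hμ, ← hμ, h, measure_union hd (measurableSet_Iic.inter measurableSet_Ioi),
      ENNReal.toReal_add (measure_ne_top _ _) (measure_ne_top _ _)]
  rw [h2]
  simp

lemma pieceM_univ (μ : Measure ℝ) [IsProbabilityMeasure μ] (G : ℝ → ℝ)
    (hμ : ∀ z, (μ (Iic z)).toReal = G z)
    (y u v : ℝ) (hu : 0 ≤ u) (hv : 0 ≤ v) :
    (pieceM μ y u v univ).toReal = u * G y + v * (1 - G y) := by
  rw [pieceM_apply μ y u v hu hv _ MeasurableSet.univ, univ_inter, univ_inter, hμ]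
  have : (μ (Ioi y)).toReal = 1 - G y := by
    have h := prob_compl_eq_one_sub (μ := μ) (measurableSet_Iic (a := y))
    rw [compl_Iic] at h
    rw [h, ENNReal.toReal_sub_of_le prob_le_one ENNReal.one_ne_top, hμ]
    simp
  rw [this]

lemma pieceM_add (μ : Measure ℝ) (y u v u' v' : ℝ) (hu : 0 ≤ u) (hv : 0 ≤ v)
    (hu' : 0 ≤ u') (hv' : 0 ≤ v') :
    pieceM μ y u v + pieceM μ y u' v' = pieceM μ y (u + u') (v + v') := by
  unfold pieceM
  rw [ENNReal.ofReal_add hu hu', ENNReal.ofReal_add hv hv', add_smul, add_smul]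
  abel

lemma pieceM_integral (μ : Measure ℝ) [IsFiniteMeasure μ] (y u v r s : ℝ)
    (hu : 0 ≤ u) (hv : 0 ≤ v)
    (A : Set ℝ) (hA : MeasurableSet A) :
    ∫ t in A, (if t ≤ y then r else s) ∂(pieceM μ y u v) =
      (r * u) * (μ (A ∩ Iic y)).toReal + (s * v) * (μ (A ∩ Ioi y)).toReal := by
  have hm : Measurable (fun t : ℝ => if t ≤ y then r else s) :=
    Measurable.ite measurableSet_Iic measurable_const measurable_const
  have hint : ∀ (ν : Measure ℝ) [IsFiniteMeasure ν],
      Integrable (fun t : ℝ => if t ≤ y then r else s) ν := by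
    intro ν _
    refine Integrable.of_bound hm.aestronglyMeasurable (|r| + |s|) (ae_of_all _ ?_)
    intro t
    rw [Real.norm_eq_abs]
    split_ifs
    · linarith [abs_nonneg s]
    · linarith [abs_nonneg r]
  have e1 : ∫ t in A ∩ Iic y, (if t ≤ y then r else s) ∂μ = r * (μ (A ∩ Iic y)).toReal := by
    rw [setIntegral_congr_fun (f := fun t : ℝ => if t ≤ y then r else s) (g := fun _ => r) (hA.inter measurableSet_Iic)
      (fun t ht => if_pos ht.2)]
    simp [Measure.real, mul_comm]
  have e2 : ∫ t in A ∩ Ioi y, (if t ≤ y then r else s) ∂μ = s * (μ (A ∩ Ioi y)).toReal := by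
    rw [setIntegral_congr_fun (f := fun t : ℝ => if t ≤ y then r else s) (g := fun _ => s) (hA.inter measurableSet_Ioi)
      (fun t ht => if_neg (not_le.mpr ht.2))]
    simp [Measure.real, mul_comm]
  unfold pieceM
  rw [Measure.restrict_add, Measure.restrict_smul, Measure.restrict_smul,
    Measure.restrict_restrict hA, Measure.restrict_restrict hA,
    integral_add_measure ((hint _).smul_measure ENNReal.ofReal_ne_top)
      ((hint _).smul_measure ENNReal.ofReal_ne_top),
    integral_smul_measure, integral_smul_measure, e1, e2,
    ENNReal.toReal_ofReal hu, ENNReal.toReal_ofReal hv]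
  simp only [smul_eq_mul]
  ring

lemma core_exists (μ : Measure ℝ) [IsProbabilityMeasure μ] (G : ℝ → ℝ)
    (hμ : ∀ z, (μ (Iic z)).toReal = G z) (y c : ℝ)
    (u v : ℕ → ℝ) (hu : ∀ i, 0 < u i) (hv : ∀ i, 0 < v i)
    (h1 : (u 0 + u 1) * G y + (v 0 + v 1) * (1 - G y) = 1)
    (hcu : |u 1 / (u 0 + u 1) - (u 1 * G y + v 1 * (1 - G y))| ≤ c)
    (hcv : |v 1 / (v 0 + v 1) - (u 1 * G y + v 1 * (1 - G y))| ≤ c) :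
    ∃ (Ω : Type) (_ : MeasurableSpace Ω) (P : Measure Ω) (V : Ω → ℝ) (X : Ω → ℕ),
      IsProbabilityMeasure P ∧ Measurable V ∧ Measurable X ∧ (∀ ω, X ω ≤ 1) ∧
      (∀ i, i ≤ 1 → (P {ω | X ω = i}).toReal = u i * G y + v i * (1 - G y)) ∧
      (∀ i, i ≤ 1 → ∀ z, (P ({ω | V ω ≤ z} ∩ {ω | X ω = i})).toReal =
        u i * G (min z y) + v i * (G (max z y) - G y)) ∧
      CDep P X V c ∧
      (P {ω | V ω ≤ y}).toReal = (u 0 + u 1) * G y := by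
  set M : ℕ → Measure ℝ := fun i => pieceM μ y (u i) (v i) with hM
  have hMf : ∀ i, IsFiniteMeasure (M i) := fun i => pieceM_fin _ _ _ _
  have hj : ∀ i : Bool, Measurable (fun t : ℝ => (t, i)) := fun i => measurable_prodMk_right
  let X : ℝ × Bool → ℕ := fun w => if w.2 = true then 1 else 0
  have hX : Measurable X := by
    exact (measurable_of_countable (fun b : Bool => if b = true then (1:ℕ) else 0)).comp measurable_snd
  let P : Measure (ℝ × Bool) :=
    (M 0).map (fun t => (t, false)) + (M 1).map (fun t => (t, true))
  have hPmap : Measure.map Prod.fst P = M 0 + M 1 := by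
    show Measure.map Prod.fst (_ + _) = _
    rw [Measure.map_add _ _ measurable_fst, Measure.map_map measurable_fst (hj _),
      Measure.map_map measurable_fst (hj _)]
    have : ∀ b : Bool, (Prod.fst ∘ fun t : ℝ => (t, b)) = id := fun b => rfl
    rw [this, this, Measure.map_id, Measure.map_id]
  have hsum : M 0 + M 1 = pieceM μ y (u 0 + u 1) (v 0 + v 1) :=
    pieceM_add μ y _ _ _ _ (hu 0).le (hv 0).le (hu 1).le (hv 1).le
  have hPX : ∀ i, i ≤ 1 → ∀ A : Set ℝ, MeasurableSet A →
      P (Prod.fst ⁻¹' A ∩ {ω | X ω = i}) = M i A := by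
    intro i hi A hA
    have hS : MeasurableSet (Prod.fst ⁻¹' A ∩ {ω | X ω = i}) :=
      (measurable_fst hA).inter (hX (measurableSet_singleton i))
    show (_ + _ : Measure (ℝ × Bool)) _ = _
    rw [Measure.add_apply, Measure.map_apply (hj _) hS, Measure.map_apply (hj _) hS]
    interval_cases i
    · have a1 : (fun t : ℝ => (t, false)) ⁻¹' (Prod.fst ⁻¹' A ∩ {ω | X ω = 0}) = A := by
        ext t; simp [X]
      have a2 : (fun t : ℝ => (t, true)) ⁻¹' (Prod.fst ⁻¹' A ∩ {ω | X ω = 0}) = ∅ := by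
        ext t; simp [X]
      rw [a1, a2]; simp
    · have a1 : (fun t : ℝ => (t, false)) ⁻¹' (Prod.fst ⁻¹' A ∩ {ω | X ω = 1}) = ∅ := by
        ext t; simp [X]
      have a2 : (fun t : ℝ => (t, true)) ⁻¹' (Prod.fst ⁻¹' A ∩ {ω | X ω = 1}) = A := by
        ext t; simp [X]
      rw [a1, a2]; simp
  have hPX' : ∀ i, i ≤ 1 → (P {ω | X ω = i}).toReal = u i * G y + v i * (1 - G y) := by
    intro i hi
    have := hPX i hi univ MeasurableSet.univ
    rw [preimage_univ, univ_inter] at this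
    rw [this]
    exact pieceM_univ μ G hμ y _ _ (hu i).le (hv i).le
  have hu01 : 0 < u 0 + u 1 := add_pos (hu 0) (hu 1)
  have hv01 : 0 < v 0 + v 1 := add_pos (hv 0) (hv 1)
  refine ⟨ℝ × Bool, inferInstance, P, Prod.fst, X, ?_, measurable_fst, hX, ?_, hPX', ?_, ?_, ?_⟩
  · constructor
    have h2 : P univ = (M 0 + M 1) univ := by
      rw [← hPmap, Measure.map_apply measurable_fst MeasurableSet.univ, preimage_univ]
    rw [h2, hsum, ← ENNReal.toReal_eq_one_iff, pieceM_univ μ G hμ y _ _ hu01.le hv01.le, h1]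
  · intro w
    simp only [X]
    split_ifs <;> simp
  · intro i hi z
    have := hPX i hi (Iic z) measurableSet_Iic
    have h3 : {ω : ℝ × Bool | ω.1 ≤ z} = Prod.fst ⁻¹' (Iic z) := rfl
    rw [h3, this]
    exact pieceM_Iic μ G hμ y _ _ (hu i).le (hv i).le z
  · refine ⟨fun t => if t ≤ y then u 1 / (u 0 + u 1) else v 1 / (v 0 + v 1),
      Measurable.ite measurableSet_Iic measurable_const measurable_const, ?_, ?_, ?_⟩
    · intro t
      have hu0 := hu 0
      have hv0 := hv 0
      have hu1 := hu 1
      have hv1 := hv 1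
      dsimp only
      split_ifs
      · exact ⟨by positivity, by rw [div_le_one hu01]; linarith⟩
      · exact ⟨by positivity, by rw [div_le_one hv01]; linarith⟩
    · intro A hA
      rw [inter_comm, hPX 1 le_rfl A hA, hPmap, hsum,
        pieceM_integral μ y _ _ _ _ hu01.le hv01.le A hA,
        pieceM_apply μ y _ _ (hu 1).le (hv 1).le A hA,
        div_mul_cancel₀ _ hu01.ne', div_mul_cancel₀ _ hv01.ne']
    · refine ae_of_all _ fun t => ?_
      rw [hPX' 1 le_rfl]
      dsimp only
      split_ifs
      · exact hcu
      · exact hcv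
  · have h3 : P {ω : ℝ × Bool | ω.1 ≤ y} = (M 0 + M 1) (Iic y) := by
      rw [← hPmap, Measure.map_apply measurable_fst measurableSet_Iic]; rfl
    rw [h3, hsum, pieceM_Iic μ G hμ y _ _ hu01.le hv01.le]
    simp

lemma G_nonneg (a b : EReal) (hab : a < b) (G : ℝ → ℝ)
    (hGmono : StrictMonoOn G {z : ℝ | a ≤ (z : EReal) ∧ (z : EReal) ≤ b})
    (hG0 : ∀ z : ℝ, (z : EReal) ≤ a → G z = 0)
    (hG1 : ∀ z : ℝ, b ≤ (z : EReal) → G z = 1)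
    (hGbot : Filter.Tendsto G Filter.atBot (nhds 0)) (z : ℝ) : 0 ≤ G z := by
  rcases le_or_gt (z : EReal) a with h | h
  · exact (hG0 z h).ge
  rcases le_or_gt b (z : EReal) with h' | h'
  · rw [hG1 z h']; exact zero_le_one
  induction a using EReal.rec with
  | bot =>
    refine le_of_tendsto hGbot ?_
    filter_upwards [Filter.eventually_le_atBot z] with w hw
    exact hGmono.monotoneOn ⟨bot_le, (EReal.coe_le_coe_iff.mpr hw).trans h'.le⟩
      ⟨bot_le, h'.le⟩ hw
  | coe a =>
    have := hGmono ⟨le_rfl, hab.le⟩ ⟨h.le, h'.le⟩ (EReal.coe_lt_coe_iff.mp h)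
    rw [hG0 a le_rfl] at this
    exact this.le
  | top => exact absurd hab (not_lt.mpr le_top)

lemma G_le_one (a b : EReal) (hab : a < b) (G : ℝ → ℝ)
    (hGmono : StrictMonoOn G {z : ℝ | a ≤ (z : EReal) ∧ (z : EReal) ≤ b})
    (hG0 : ∀ z : ℝ, (z : EReal) ≤ a → G z = 0)
    (hG1 : ∀ z : ℝ, b ≤ (z : EReal) → G z = 1)
    (hGtop : Filter.Tendsto G Filter.atTop (nhds 1)) (z : ℝ) : G z ≤ 1 := by
  rcases le_or_gt (z : EReal) a with h | h
  · rw [hG0 z h]; exact zero_le_one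
  rcases le_or_gt b (z : EReal) with h' | h'
  · exact (hG1 z h').le
  induction b using EReal.rec with
  | top =>
    refine ge_of_tendsto hGtop ?_
    filter_upwards [Filter.eventually_ge_atTop z] with w hw
    exact hGmono.monotoneOn ⟨h.le, le_top⟩
      ⟨h.le.trans (EReal.coe_le_coe_iff.mpr hw), le_top⟩ hw
  | coe b =>
    have := hGmono ⟨h.le, h'.le⟩ ⟨hab.le, le_rfl⟩ (EReal.coe_lt_coe_iff.mp h')
    rw [hG1 b le_rfl] at this
    exact this.le
  | bot => exact absurd hab (not_lt.mpr bot_le)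

/-- Sharpness of the potential-outcome cdf bounds: any value `e` strictly between
the lower and the upper bound at a point `y` in the interior of the support is
attained by some joint distribution of `(V, X)` consistent with the observed
conditional cdf `G` of `V` given `X = x`, the marginal `P(X = x) = p_x`, the
support and continuity conditions, and `c`-dependence. -/
theorem potential_outcome_cdf_bounds_sharp
    (x : ℕ) (hx : x ≤ 1)
    (a b : EReal) (hab : a < b)
    (G : ℝ → ℝ)
    (hGcont : Continuous G)
    (hGmono : StrictMonoOn G {z : ℝ | a ≤ (z : EReal) ∧ (z : EReal) ≤ b})
    (hG0 : ∀ z : ℝ, (z : EReal) ≤ a → G z = 0)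
    (hG1 : ∀ z : ℝ, b ≤ (z : EReal) → G z = 1)
    (hGbot : Filter.Tendsto G Filter.atBot (nhds 0))
    (hGtop : Filter.Tendsto G Filter.atTop (nhds 1))
    (pxv : ℝ) (hpx : pxv ∈ Set.Ioo (0:ℝ) 1) (c : ℝ) (hc : c ∈ Set.Ioc (0:ℝ) 1)
    (y : ℝ) (hy : a < (y : EReal) ∧ (y : EReal) < b)
    (e : ℝ)
    (he_lower : max (max (pxv * G y / (pxv + c))
        (if c < pxv then (pxv * G y - c) / (pxv - c) else 0)) (pxv * G y) < e)
    (he_upper : e < min (min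
        (if c < pxv then pxv * G y / (pxv - c) else 1)
        ((pxv * G y + c) / (pxv + c))) (pxv * G y + (1 - pxv))) :
    ∃ (Ω : Type) (_ : MeasurableSpace Ω) (P : Measure Ω) (V : Ω → ℝ) (X : Ω → ℕ),
      IsProbabilityMeasure P ∧ Measurable V ∧ Measurable X ∧ (∀ ω, X ω ≤ 1) ∧
      (P {ω | X ω = x}).toReal = pxv ∧
      (∀ y' : ℝ, condCDF' P X V x y' = G y') ∧
      (∀ x' : ℕ, x' ≤ 1 →
        Continuous (condCDF' P X V x') ∧
        StrictMonoOn (condCDF' P X V x') {z : ℝ | a ≤ (z : EReal) ∧ (z : EReal) ≤ b} ∧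
        (∀ z : ℝ, (z : EReal) ≤ a → condCDF' P X V x' z = 0) ∧
        (∀ z : ℝ, b ≤ (z : EReal) → condCDF' P X V x' z = 1)) ∧
      CDep P X V c ∧
      (P {ω | V ω ≤ y}).toReal = e := by
  have hnn := G_nonneg a b hab G hGmono hG0 hG1 hGbot
  have hle := G_le_one a b hab G hGmono hG0 hG1 hGtop
  have hmono : Monotone G := by
    intro s t hst
    rcases le_or_gt (s : EReal) a with h | h
    · rw [hG0 s h]; exact hnn t
    rcases le_or_gt b (t : EReal) with h' | h'
    · rw [hG1 t h']; exact hle s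
    have hst' : (s : EReal) ≤ t := EReal.coe_le_coe_iff.mpr hst
    exact hGmono.monotoneOn ⟨h.le, hst'.trans h'.le⟩ ⟨h.le.trans hst', h'.le⟩ hst
  have hy0 : 0 < G y := by
    obtain ⟨w, hw1, hw2⟩ := EReal.lt_iff_exists_real_btwn.mp hy.1
    exact (hnn w).trans_lt (hGmono ⟨hw1.le, (hw2.trans hy.2).le⟩ ⟨hy.1.le, hy.2.le⟩
      (EReal.coe_lt_coe_iff.mp hw2))
  have hy1 : G y < 1 := by
    obtain ⟨w, hw1, hw2⟩ := EReal.lt_iff_exists_real_btwn.mp hy.2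
    exact (hGmono ⟨hy.1.le, hy.2.le⟩ ⟨(hy.1.trans hw1).le, hw2.le⟩
      (EReal.coe_lt_coe_iff.mp hw1)).trans_le (hle w)
  let F : StieltjesFunction ℝ := ⟨G, hmono, fun t => hGcont.continuousWithinAt⟩
  have hFp : IsProbabilityMeasure F.measure := F.isProbabilityMeasure hGbot hGtop
  have hμ : ∀ z, (F.measure (Iic z)).toReal = G z := by
    intro z
    rw [F.measure_Iic hGbot, ENNReal.toReal_ofReal]
    · exact sub_zero _
    · rw [sub_zero]; exact hnn z
  obtain ⟨hp0, hp1⟩ := hpx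
  obtain ⟨hc0, hc1⟩ := hc
  rw [max_lt_iff, max_lt_iff] at he_lower
  rw [lt_min_iff, lt_min_iff] at he_upper
  obtain ⟨⟨hl1, hl2⟩, hl3⟩ := he_lower
  obtain ⟨⟨hr1, hr2⟩, hr3⟩ := he_upper
  have hpc : 0 < pxv + c := by linarith
  rw [div_lt_iff₀ hpc] at hl1
  rw [lt_div_iff₀ hpc] at hr2
  have he0 : 0 < e := lt_trans (mul_pos hp0 hy0) hl3
  have he1 : e < 1 := by nlinarith
  have hl2' : pxv * G y - c ≤ e * (pxv - c) := by
    split_ifs at hl2 with h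
    · rw [div_lt_iff₀ (by linarith)] at hl2; exact hl2.le
    · nlinarith
  have hr1' : e * (pxv - c) ≤ pxv * G y := by
    split_ifs at hr1 with h
    · rw [lt_div_iff₀ (by linarith)] at hr1; exact hr1.le
    · nlinarith
  have hy1' : 0 < 1 - G y := by linarith
  have he1' : 0 < 1 - e := by linarith
  set k1 : ℝ := e / G y with hk1
  set k2 : ℝ := (1 - e) / (1 - G y) with hk2
  have hk1G : k1 * G y = e := div_mul_cancel₀ _ hy0.ne'
  have hk2G : k2 * (1 - G y) = 1 - e := div_mul_cancel₀ _ hy1'.ne'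
  have hk1p : pxv < k1 := by rw [hk1, lt_div_iff₀ hy0]; exact hl3
  have hk2p : pxv < k2 := by rw [hk2, lt_div_iff₀ hy1']; linarith
  have hk10 : 0 < k1 := hp0.trans hk1p
  have hk20 : 0 < k2 := hp0.trans hk2p
  have hq1 : |pxv / k1 - pxv| ≤ c := by
    have : pxv / k1 = pxv * G y / e := by rw [hk1]; field_simp
    rw [this, abs_le]
    constructor
    · have : pxv - c ≤ pxv * G y / e := by rw [le_div_iff₀ he0]; linarith
      linarith
    · have : pxv * G y / e ≤ pxv + c := by rw [div_le_iff₀ he0]; linarith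
      linarith
  have hq2 : |pxv / k2 - pxv| ≤ c := by
    have : pxv / k2 = pxv * (1 - G y) / (1 - e) := by rw [hk2]; field_simp
    rw [this, abs_le]
    constructor
    · have : pxv - c ≤ pxv * (1 - G y) / (1 - e) := by rw [le_div_iff₀ he1']; linarith
      linarith
    · have : pxv * (1 - G y) / (1 - e) ≤ pxv + c := by rw [div_le_iff₀ he1']; linarith
      linarith
  let u : ℕ → ℝ := fun i => if i = x then pxv else k1 - pxv
  let v : ℕ → ℝ := fun i => if i = x then pxv else k2 - pxv
  have hu : ∀ i, 0 < u i := by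
    intro i; simp only [u]; split_ifs <;> linarith
  have hv : ∀ i, 0 < v i := by
    intro i; simp only [v]; split_ifs <;> linarith
  have hus : u 0 + u 1 = k1 := by
    simp only [u]; interval_cases x <;> simp
  have hvs : v 0 + v 1 = k2 := by
    simp only [v]; interval_cases x <;> simp
  have hside : |u 1 / k1 - (u 1 * G y + v 1 * (1 - G y))| ≤ c ∧
      |v 1 / k2 - (u 1 * G y + v 1 * (1 - G y))| ≤ c := by
    have hx01 : x = 0 ∨ x = 1 := by omega
    rcases hx01 with hx0 | hx0
    · have h1 : u 1 = k1 - pxv := by simp [u, hx0]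
      have h2 : v 1 = k2 - pxv := by simp [v, hx0]
      have h3 : (k1 - pxv) * G y + (k2 - pxv) * (1 - G y) = 1 - pxv := by linarith
      rw [h1, h2, h3, sub_div, sub_div, div_self hk10.ne', div_self hk20.ne']
      constructor
      · rw [abs_sub_comm] at hq1; convert hq1 using 2; ring
      · rw [abs_sub_comm] at hq2; convert hq2 using 2; ring
    · have h1 : u 1 = pxv := by simp [u, hx0]
      have h2 : v 1 = pxv := by simp [v, hx0]
      have h3 : pxv * G y + pxv * (1 - G y) = pxv := by ring
      rw [h1, h2, h3]
      exact ⟨hq1, hq2⟩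
  obtain ⟨Ω, mΩ, P, V, X, hP, hV, hX, hX1, hPX, hPV, hdep, hfin⟩ :=
    core_exists F.measure G hμ y c u v hu hv (by rw [hus, hvs]; linarith)
      (by rw [hus]; exact hside.1) (by rw [hvs]; exact hside.2)
  have hcdf : ∀ i, i ≤ 1 → ∀ z, condCDF' P X V i z =
      (u i * G (min z y) + v i * (G (max z y) - G y)) / (u i * G y + v i * (1 - G y)) := by
    intro i hi z
    rw [condCDF', hPV i hi z, hPX i hi]
  have hux : u x = pxv := by simp [u]
  have hvx : v x = pxv := by simp [v]
  have hpos : ∀ i, 0 < u i * G y + v i * (1 - G y) := fun i =>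
    add_pos (mul_pos (hu i) hy0) (mul_pos (hv i) hy1')
  refine ⟨Ω, mΩ, P, V, X, hP, hV, hX, hX1, ?_, ?_, ?_, hdep, ?_⟩
  · rw [hPX x hx, hux, hvx]; ring
  · intro z
    rw [hcdf x hx, hux, hvx]
    rcases le_total z y with h | h
    · rw [min_eq_left h, max_eq_right h]; field_simp; ring
    · rw [min_eq_right h, max_eq_left h]; field_simp; ring
  · intro i hi
    have hfun : condCDF' P X V i = fun z => (u i * G (min z y) + v i * (G (max z y) - G y)) /
        (u i * G y + v i * (1 - G y)) := funext (hcdf i hi)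
    have hyy : y ∈ {z : ℝ | a ≤ (z : EReal) ∧ (z : EReal) ≤ b} := ⟨hy.1.le, hy.2.le⟩
    rw [hfun]
    refine ⟨?_, ?_, ?_, ?_⟩
    · fun_prop
    · intro s hs t ht hst
      refine div_lt_div_of_pos_right ?_ (hpos i)
      rcases lt_or_ge s y with h | h
      · have m1 : G (min s y) < G (min t y) := by
          rw [min_eq_left h.le]
          rcases le_total t y with h' | h'
          · rw [min_eq_left h']; exact hGmono hs ht hst
          · rw [min_eq_right h']; exact hGmono hs hyy h
        have m2 : G (max s y) ≤ G (max t y) := hmono (max_le_max hst.le le_rfl)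
        have := mul_lt_mul_of_pos_left m1 (hu i)
        have := mul_le_mul_of_nonneg_left m2 (hv i).le
        linarith
      · rw [min_eq_right h, max_eq_left h, min_eq_right (h.trans hst.le),
          max_eq_left (h.trans hst.le)]
        have := mul_lt_mul_of_pos_left (hGmono hs ht hst) (hv i)
        linarith
    · intro z hz
      have h : z ≤ y := EReal.coe_le_coe_iff.mp (hz.trans hy.1.le)
      dsimp only
      rw [min_eq_left h, max_eq_right h, hG0 z hz]; simp
    · intro z hz
      have h : y ≤ z := EReal.coe_le_coe_iff.mp (hy.2.le.trans hz)
      dsimp only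
      rw [min_eq_right h, max_eq_left h, hG1 z hz]
      exact div_self (hpos i).ne'
  · rw [hfin, hus, hk1G]
end
end

section
/- Assume the potential outcomes setup and suppose X is c-dependent with Y_x for a given x ∈ {0,1} and c ∈ [0,1]. Then for every τ ∈ (0,1), the τ-th quantile of Y_x satisfies Q_{Y|X}( max{ τ − (c/p_x)·min{τ, 1−τ}, (τ−1)/p_x + 1, 0 } | x ) ≤ Q_{Y_x}(τ) ≤ Q_{Y|X}( min{ τ + (c/p_x)·min{τ, 1−τ}, τ/p_x, 1 } | x ), where the bounds may take the extended values y̲_x or ȳ_x. -/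
open MeasureTheory Set

noncomputable section

/-- The (extended-real-valued) quantile function of a cdf `G`, equal to the left
inverse of `G` on `(0,1)` and extended by the support endpoints `lo` at `0` and
`hi` at `1`. -/
def Qgen (G : ℝ → ℝ) (lo hi : EReal) (τ : ℝ) : EReal :=
  if τ ≤ 0 then lo else if 1 ≤ τ then hi
  else ((sInf {y : ℝ | τ ≤ G y} : ℝ) : EReal)

/-- The clipped quantile level used in the upper quantile bound. -/
def qUp (p c τ : ℝ) : ℝ := min (min (τ + c / p * min τ (1 - τ)) (τ / p)) 1

/-- The clipped quantile level used in the lower quantile bound. -/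
def qLo (p c τ : ℝ) : ℝ := max (max (τ - c / p * min τ (1 - τ)) ((τ - 1) / p + 1)) 0

/-- The `τ`-th quantile of the random variable `V`. -/
def quant {Ω : Type*} [MeasurableSpace Ω] (P : Measure Ω) (V : Ω → ℝ) (τ : ℝ) : ℝ :=
  sInf {z : ℝ | τ ≤ (P {ω | V ω ≤ z}).toReal}


lemma aux_dep {Ω : Type*} [MeasurableSpace Ω] (P : Measure Ω) [IsProbabilityMeasure P]
    (V : Ω → ℝ) (X : Ω → ℕ) (hV : Measurable V) (hX : Measurable X)
    (hX01 : ∀ ω, X ω ≤ 1) (x : ℕ) (hx : x ≤ 1) (c : ℝ) (hdep : CDep P X V c)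
    (A : Set ℝ) (hA : MeasurableSet A) :
    |P.real ({ω | X ω = x} ∩ V ⁻¹' A) - P.real {ω | X ω = x} * P.real (V ⁻¹' A)|
      ≤ c * P.real (V ⁻¹' A) := by
  obtain ⟨g, hg, hg01, hgA, hgc⟩ := hdep
  have hVA : MeasurableSet (V ⁻¹' A) := hV hA
  have hX1 : MeasurableSet {ω | X ω = 1} := hX (measurableSet_singleton 1)
  have hprob : IsProbabilityMeasure (Measure.map V P) :=
    Measure.isProbabilityMeasure_map hV.aemeasurable
  have hmap : (Measure.map V P).real A = P.real (V ⁻¹' A) := by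
    simp [measureReal_def, Measure.map_apply hV hA]
  have key : |P.real ({ω | X ω = 1} ∩ V ⁻¹' A) - P.real {ω | X ω = 1} * P.real (V ⁻¹' A)|
      ≤ c * P.real (V ⁻¹' A) := by
    have hgi : Integrable g (Measure.map V P) := by
      refine Integrable.of_bound hg.aestronglyMeasurable 1 (Filter.Eventually.of_forall ?_)
      intro v
      rw [Real.norm_eq_abs, abs_le]
      constructor <;> linarith [(hg01 v).1, (hg01 v).2]
    have e : P.real ({ω | X ω = 1} ∩ V ⁻¹' A) - P.real {ω | X ω = 1} * P.real (V ⁻¹' A)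
        = ∫ v in A, (g v - P.real {ω | X ω = 1}) ∂(Measure.map V P) := by
      rw [integral_sub hgi.integrableOn (integrable_const _), ← hgA A hA, setIntegral_const, hmap]
      simp [measureReal_def, mul_comm]
    rw [e, ← hmap, ← Real.norm_eq_abs]
    apply norm_setIntegral_le_of_norm_le_const_ae' (measure_lt_top _ _)
    filter_upwards [hgc] with v hv _
    exact hv
  interval_cases x
  · have h0 : {ω | X ω = 0} = {ω | X ω = 1}ᶜ := by
      ext ω
      have := hX01 ω
      simp only [mem_setOf_eq, mem_compl_iff]
      omega
    have e1 : P.real {ω | X ω = 0} = 1 - P.real {ω | X ω = 1} := by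
      rw [h0, probReal_compl_eq_one_sub hX1]
    have e2 : P.real ({ω | X ω = 0} ∩ V ⁻¹' A)
        = P.real (V ⁻¹' A) - P.real ({ω | X ω = 1} ∩ V ⁻¹' A) := by
      have := measureReal_inter_add_diff (μ := P) (s := V ⁻¹' A) hX1
      rw [h0, inter_comm, ← diff_eq, inter_comm]
      linarith
    rw [e1, e2]
    rw [abs_le] at key ⊢
    constructor <;> linarith [key.1, key.2]
  · exact key

/-- Bounds on the quantiles of the potential outcome `Y_x` under `c`-dependence:
for `τ ∈ (0,1)`,
`Q_{Y|X}(max{τ - (c/p_x)min{τ,1-τ}, (τ-1)/p_x + 1, 0} | x) ≤ Q_{Y_x}(τ)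
  ≤ Q_{Y|X}(min{τ + (c/p_x)min{τ,1-τ}, τ/p_x, 1} | x)`,
where the bounds may take the extended values `y̲_x` or `ȳ_x`. -/
theorem potential_outcome_quantile_bounds {Ω : Type*} [MeasurableSpace Ω]
    (P : Measure Ω) [IsProbabilityMeasure P]
    (Yv : ℕ → Ω → ℝ) (X : Ω → ℕ) (Y : Ω → ℝ)
    (hYm : ∀ x, Measurable (Yv x)) (hXm : Measurable X)
    (hX01 : ∀ ω, X ω ≤ 1)
    (hY : ∀ ω, Y ω = Yv (X ω) ω)
    (hp1 : px P X 1 ∈ Set.Ioo (0:ℝ) 1)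
    (lo hi : ℕ → EReal) (hlh : ∀ x ≤ 1, lo x < hi x)
    (hcont : ∀ x ≤ 1, ∀ x' ≤ 1, Continuous (condCDF' P X (Yv x) x'))
    (hmono : ∀ x ≤ 1, ∀ x' ≤ 1, StrictMonoOn (condCDF' P X (Yv x) x')
      {y : ℝ | lo x ≤ (y : EReal) ∧ (y : EReal) ≤ hi x})
    (hsupp : ∀ x ≤ 1, ∀ x' ≤ 1, ∀ y : ℝ,
      ((y : EReal) ≤ lo x → condCDF' P X (Yv x) x' y = 0) ∧
      (hi x ≤ (y : EReal) → condCDF' P X (Yv x) x' y = 1))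
    (x : ℕ) (hx : x ≤ 1) (c : ℝ) (hc : c ∈ Set.Icc (0:ℝ) 1)
    (hdep : CDep P X (Yv x) c) :
    ∀ τ : ℝ, 0 < τ → τ < 1 →
      Qgen (condCDF' P X Y x) (lo x) (hi x) (qLo (px P X x) c τ) ≤
        ((quant P (Yv x) τ : ℝ) : EReal) ∧
      ((quant P (Yv x) τ : ℝ) : EReal) ≤
        Qgen (condCDF' P X Y x) (lo x) (hi x) (qUp (px P X x) c τ) := by
  intro τ h0 h1
  have hG : condCDF' P X Y x = condCDF' P X (Yv x) x := by
    funext y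
    have : ({ω | Y ω ≤ y} ∩ {ω | X ω = x}) = ({ω | Yv x ω ≤ y} ∩ {ω | X ω = x}) := by
      ext ω
      simp only [mem_inter_iff, mem_setOf_eq]
      constructor
      · rintro ⟨a, b⟩
        rw [hY, b] at a
        exact ⟨a, b⟩
      · rintro ⟨a, b⟩
        rw [hY, b]
        exact ⟨a, rfl⟩
    unfold condCDF'
    rw [this]
  rw [hG]
  have hXx : ∀ k, MeasurableSet {ω | X ω = k} := fun k => hXm (measurableSet_singleton k)
  have hc0 : {ω | X ω = 0} = {ω | X ω = 1}ᶜ := by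
    ext ω
    have := hX01 ω
    simp only [mem_setOf_eq, mem_compl_iff]
    omega
  have e1 : px P X 0 = 1 - px P X 1 := by
    unfold px
    rw [hc0]
    exact probReal_compl_eq_one_sub (hXx 1)
  have hpk : ∀ k ≤ 1, 0 < px P X k := by
    intro k hk
    interval_cases k
    · rw [e1]; linarith [hp1.2]
    · exact hp1.1
  set F : ℝ → ℝ := fun y => P.real {ω | Yv x ω ≤ y} with hFdef
  have hHG : ∀ k ≤ 1, ∀ y, P.real ({ω | Yv x ω ≤ y} ∩ {ω | X ω = k})
      = px P X k * condCDF' P X (Yv x) k y := by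
    intro k hk y
    have := hpk k hk
    have h2 : condCDF' P X (Yv x) k y = P.real ({ω | Yv x ω ≤ y} ∩ {ω | X ω = k}) / px P X k := rfl
    rw [h2]
    field_simp
  have hFG : ∀ y, F y = px P X 1 * condCDF' P X (Yv x) 1 y
      + px P X 0 * condCDF' P X (Yv x) 0 y := by
    intro y
    rw [← hHG 1 le_rfl, ← hHG 0 zero_le_one, hc0, ← diff_eq]
    exact (measureReal_inter_add_diff (hXx 1)).symm
  have hFc : Continuous F := by
    have : F = fun y => px P X 1 * condCDF' P X (Yv x) 1 y
      + px P X 0 * condCDF' P X (Yv x) 0 y := funext hFG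
    rw [this]
    exact ((hcont x hx 1 le_rfl).const_smul (px P X 1)).add
      ((hcont x hx 0 zero_le_one).const_smul (px P X 0))
  have hprob : IsProbabilityMeasure (Measure.map (Yv x) P) :=
    Measure.isProbabilityMeasure_map (hYm x).aemeasurable
  have hFcdf : F = ProbabilityTheory.cdf (Measure.map (Yv x) P) := by
    funext y
    rw [ProbabilityTheory.cdf_eq_real, measureReal_def,
      Measure.map_apply (hYm x) measurableSet_Iic]
    rfl
  have hFmono : Monotone F := by
    rw [hFcdf]; exact ProbabilityTheory.monotone_cdf _
  have hbot : Filter.Tendsto F Filter.atBot (nhds 0) := by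
    rw [hFcdf]; exact ProbabilityTheory.tendsto_cdf_atBot _
  have htop : Filter.Tendsto F Filter.atTop (nhds 1) := by
    rw [hFcdf]; exact ProbabilityTheory.tendsto_cdf_atTop _
  have hbdd : ∀ t > 0, BddBelow {z | t ≤ F z} := by
    intro t ht
    obtain ⟨b, hb⟩ := (hbot.eventually (gt_mem_nhds ht)).exists
    refine ⟨b, fun z hz => ?_⟩
    by_contra hlt
    push Not at hlt
    have := hFmono hlt.le
    simp only [mem_setOf_eq] at hz
    linarith
  have hne : ∀ t < 1, ∃ z, t < F z := fun t ht => (htop.eventually (lt_mem_nhds ht)).exists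
  set q := quant P (Yv x) τ with hq
  have hqdef : q = sInf {z | τ ≤ F z} := rfl
  have hFq : F q = τ := by
    have hn : {z | τ ≤ F z}.Nonempty := by
      obtain ⟨z, hz⟩ := hne τ h1
      exact ⟨z, hz.le⟩
    apply le_antisymm
    · by_contra hlt
      push Not at hlt
      have hopen : ∀ᶠ z in nhdsWithin q (Iio q), τ < F z :=
        (hFc.continuousAt.eventually (lt_mem_nhds hlt)).filter_mono nhdsWithin_le_nhds
      obtain ⟨z, hz, hzq⟩ := (hopen.and self_mem_nhdsWithin).exists
      have : q ≤ z := csInf_le (hbdd τ h0) hz.le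
      exact absurd hzq (not_lt.mpr this)
    · exact (isClosed_le continuous_const hFc).csInf_mem hn (hbdd τ h0)
  set p := px P X x with hp
  have hp0 : 0 < p := hpk x hx
  set G := condCDF' P X (Yv x) x with hGdef
  have hH : ∀ y, P.real ({ω | Yv x ω ≤ y} ∩ {ω | X ω = x}) = p * G y := hHG x hx
  have hFm : ∀ y, MeasurableSet {ω | Yv x ω ≤ y} := fun y => hYm x measurableSet_Iic
  have hHc : ∀ y, P.real ({ω | X ω = x} ∩ Yv x ⁻¹' Ioi y) = p - p * G y := by
    intro y
    have h2 := measureReal_inter_add_diff (μ := P) (s := {ω | X ω = x}) (hFm y)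
    rw [inter_comm, hH] at h2
    have h3 : {ω | X ω = x} \ {ω | Yv x ω ≤ y} = {ω | X ω = x} ∩ Yv x ⁻¹' Ioi y := by
      ext ω; simp
    rw [h3] at h2
    have h4 : P.real {ω | X ω = x} = p := rfl
    linarith
  have hFcomp : ∀ y, P.real (Yv x ⁻¹' Ioi y) = 1 - F y := by
    intro y
    rw [← probReal_compl_eq_one_sub (hFm y)]
    congr 1
    ext ω; simp
  have b1 : ∀ y, p * G y ≤ F y := by
    intro y; rw [← hH]; exact measureReal_mono inter_subset_left
  have b2 : ∀ y, p - p * G y ≤ 1 - F y := by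
    intro y; rw [← hHc, ← hFcomp]; exact measureReal_mono inter_subset_right
  have b3 : ∀ y, |p * G y - p * F y| ≤ c * F y := by
    intro y
    have := aux_dep P (Yv x) X (hYm x) hXm hX01 x hx c hdep (Iic y) measurableSet_Iic
    rw [inter_comm] at this
    rw [← hH]
    exact this
  have b4 : ∀ y, |p * G y - p * F y| ≤ c * (1 - F y) := by
    intro y
    have := aux_dep P (Yv x) X (hYm x) hXm hX01 x hx c hdep (Ioi y) measurableSet_Ioi
    rw [hHc, hFcomp] at this
    have h4 : P.real {ω | X ω = x} = p := rfl
    rw [h4, abs_sub_comm] at this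
    convert this using 2
    ring
  have hGmono : Monotone G := by
    intro a b hab
    have : p * G a ≤ p * G b := by
      rw [← hH, ← hH]
      exact measureReal_mono (fun ω hω => ⟨le_trans hω.1 hab, hω.2⟩)
    exact le_of_mul_le_mul_left this hp0
  have hG0 : ∀ y, 0 ≤ G y := fun y => by
    show 0 ≤ _ / _
    positivity
  have hG1 : ∀ y, G y ≤ 1 := by
    intro y
    have h5 : F y ≤ 1 := measureReal_le_one
    have h6 := b2 y
    have : p * G y ≤ p * 1 := by
      rw [← hH, mul_one]; exact measureReal_mono inter_subset_right
    exact le_of_mul_le_mul_left this hp0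
  have hb : |p * G q - p * τ| ≤ c * min τ (1 - τ) := by
    have h3 := b3 q
    have h4 := b4 q
    rw [hFq] at h3 h4
    rcases min_choice τ (1 - τ) with h | h <;> rw [h] <;> assumption
  have hb' := abs_le.mp hb
  have eG : c / p * min τ (1 - τ) = (c * min τ (1 - τ)) / p := by ring
  have hlow : qLo p c τ ≤ G q := by
    unfold qLo
    refine max_le (max_le ?_ ?_) (hG0 q)
    · rw [eG, sub_le_iff_le_add, ← sub_le_iff_le_add', le_div_iff₀ hp0]
      linarith [hb'.1]
    · have := b2 q
      rw [hFq] at this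
      rw [← le_sub_iff_add_le, div_le_iff₀ hp0]
      linarith
  have hup : G q ≤ qUp p c τ := by
    unfold qUp
    refine le_min (le_min ?_ ?_) (hG1 q)
    · rw [eG, ← sub_le_iff_le_add', le_div_iff₀ hp0]
      linarith [hb'.2]
    · have := b1 q
      rw [hFq] at this
      rw [le_div_iff₀ hp0]
      linarith
  have hm : 0 < min τ (1 - τ) := lt_min h0 (by linarith)
  have hcp : 0 ≤ c / p * min τ (1 - τ) := mul_nonneg (div_nonneg hc.1 hp0.le) hm.le
  have hlo1 : qLo p c τ < 1 := by
    unfold qLo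
    refine max_lt (max_lt (by linarith) ?_) one_pos
    have : (τ - 1) / p < 0 := div_neg_of_neg_of_pos (by linarith) hp0
    linarith
  have hup0 : 0 < qUp p c τ := by
    unfold qUp
    exact lt_min (lt_min (by linarith) (div_pos h0 hp0)) one_pos
  have hlq : lo x ≤ (q : EReal) := by
    by_contra hlt
    push Not at hlt
    have := hFG q
    rw [(hsupp x hx 1 le_rfl q).1 hlt.le, (hsupp x hx 0 zero_le_one q).1 hlt.le, hFq] at this
    linarith
  have hqh : (q : EReal) ≤ hi x := by
    by_contra hlt
    push Not at hlt
    have := hFG q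
    rw [(hsupp x hx 1 le_rfl q).2 hlt.le, (hsupp x hx 0 zero_le_one q).2 hlt.le, hFq, e1] at this
    linarith
  constructor
  · unfold Qgen
    split_ifs with i1 i2
    · exact hlq
    · linarith
    · rw [EReal.coe_le_coe_iff]
      push Not at i1
      refine csInf_le ((hbdd (p * qLo p c τ) (mul_pos hp0 i1)).mono ?_) hlow
      intro y hy
      exact (mul_le_mul_of_nonneg_left hy hp0.le).trans (b1 y)
  · unfold Qgen
    split_ifs with i1 i2
    · linarith
    · exact hqh
    · rw [EReal.coe_le_coe_iff]
      push Not at i2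
      apply le_csInf
      · obtain ⟨z, hz⟩ := hne (1 - p * (1 - qUp p c τ)) (by nlinarith)
        refine ⟨z, ?_⟩
        have h7 := b2 z
        have : p * qUp p c τ ≤ p * G z := by linarith
        exact le_of_mul_le_mul_left this hp0
      · intro y hy
        by_contra hlt
        push Not at hlt
        simp only [mem_setOf_eq] at hy
        have hly : lo x ≤ (y : EReal) := by
          by_contra hl
          push Not at hl
          have : G y = 0 := (hsupp x hx x hx y).1 hl.le
          linarith
        have hyq : (y : EReal) < q := EReal.coe_lt_coe_iff.mpr hlt
        have : G y < G q := hmono x hx x hx ⟨hly, hyq.le.trans hqh⟩ ⟨hlq, hqh⟩ hlt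
        linarith
end
end

section
/- Assume the potential outcomes setup, suppose X is c-dependent with both Y_1 and Y_0 for c ∈ [0,1], suppose E(|Y| | X = x) < ∞ for x ∈ {0,1}, and suppose Y_1 and Y_0 are integrable. Then for each x ∈ {0,1}, E(Y_x) ∈ [ ∫_0^1 Q̲^c_x(τ) dτ, ∫_0^1 Q̄^c_x(τ) dτ ], and consequently E(Y_1 − Y_0) ∈ [ ∫_0^1 (Q̲^c_1(τ) − Q̄^c_0(τ)) dτ, ∫_0^1 (Q̄^c_1(τ) − Q̲^c_0(τ)) dτ ] (where these integrals may take values ±∞). -/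
open MeasureTheory Set ENNReal

noncomputable section

/-- The truncation of an extended real to `ℝ≥0∞`. -/
def toENN (a : EReal) : ℝ≥0∞ := if a = ⊤ then ⊤ else ENNReal.ofReal a.toReal

/-- The (possibly infinite) signed integral `∫_0^1 f(τ) dτ` of an
extended-real-valued function, as an extended real. -/
def eint01 (f : ℝ → EReal) : EReal :=
  ((∫⁻ τ in Set.Ioo (0:ℝ) 1, toENN (f τ) : ℝ≥0∞) : EReal) -
    ((∫⁻ τ in Set.Ioo (0:ℝ) 1, toENN (-(f τ)) : ℝ≥0∞) : EReal)


lemma toENN_mono' {a b : EReal} (h : a ≤ b) : toENN a ≤ toENN b := by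
  unfold toENN
  by_cases hb : b = ⊤
  · simp [hb]
  · have ha : a ≠ ⊤ := fun h' => hb (top_le_iff.1 (h' ▸ h))
    simp only [ha, hb, if_false]
    by_cases hab : a = ⊥
    · subst hab; simp
    · exact ENNReal.ofReal_le_ofReal (EReal.toReal_le_toReal h hab hb)

lemma toENN_coe' (r : ℝ) : toENN (r : EReal) = ENNReal.ofReal r := by
  simp [toENN]

lemma eint01_mono' {f g : ℝ → EReal} (h : ∀ τ ∈ Ioo (0:ℝ) 1, f τ ≤ g τ) :
    eint01 f ≤ eint01 g := by
  unfold eint01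
  apply EReal.sub_le_sub
  · exact_mod_cast setLIntegral_mono' measurableSet_Ioo fun τ hτ => toENN_mono' (h τ hτ)
  · exact_mod_cast setLIntegral_mono' measurableSet_Ioo fun τ hτ =>
      toENN_mono' (EReal.neg_le_neg_iff.2 (h τ hτ))

lemma eint01_coe' {h : ℝ → ℝ} (hi : IntegrableOn h (Ioo 0 1)) :
    eint01 (fun τ => (h τ : EReal)) = ((∫ τ in Ioo (0:ℝ) 1, h τ : ℝ) : EReal) := by
  unfold eint01
  simp only [← EReal.coe_neg, toENN_coe']
  rw [integral_eq_lintegral_pos_part_sub_lintegral_neg_part hi, EReal.coe_sub]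
  have h1 : (∫⁻ τ in Ioo (0:ℝ) 1, ENNReal.ofReal (h τ)) ≠ ⊤ := hi.lintegral_lt_top.ne
  have h2 : (∫⁻ τ in Ioo (0:ℝ) 1, ENNReal.ofReal (- h τ)) ≠ ⊤ := hi.neg.lintegral_lt_top.ne
  rw [EReal.coe_ennreal_toReal h1, EReal.coe_ennreal_toReal h2]

lemma F_eq_cdf {Ω : Type*} [MeasurableSpace Ω] (P : Measure Ω) [IsProbabilityMeasure P]
    {V : Ω → ℝ} (hV : Measurable V) (y : ℝ) :
    (P {ω | V ω ≤ y}).toReal = ProbabilityTheory.cdf (P.map V) y := by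
  have : IsProbabilityMeasure (P.map V) := Measure.isProbabilityMeasure_map hV.aemeasurable
  rw [ProbabilityTheory.cdf_eq_real, measureReal_def, Measure.map_apply hV measurableSet_Iic]
  rfl

lemma exists_F_gt {Ω : Type*} [MeasurableSpace Ω] (P : Measure Ω) [IsProbabilityMeasure P]
    {V : Ω → ℝ} (hV : Measurable V) {t : ℝ} (ht : t < 1) :
    ∃ y, t < (P {ω | V ω ≤ y}).toReal := by
  simp only [F_eq_cdf P hV]
  exact ((ProbabilityTheory.tendsto_cdf_atTop (P.map V)).eventually_const_lt ht).exists

lemma exists_F_lt {Ω : Type*} [MeasurableSpace Ω] (P : Measure Ω) [IsProbabilityMeasure P]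
    {V : Ω → ℝ} (hV : Measurable V) {t : ℝ} (ht : 0 < t) :
    ∃ y, (P {ω | V ω ≤ y}).toReal < t := by
  simp only [F_eq_cdf P hV]
  exact ((ProbabilityTheory.tendsto_cdf_atBot (P.map V)).eventually_lt_const ht).exists

lemma F_mono {Ω : Type*} [MeasurableSpace Ω] (P : Measure Ω) [IsProbabilityMeasure P]
    {V : Ω → ℝ} (hV : Measurable V) : Monotone fun y => (P {ω | V ω ≤ y}).toReal := by
  simp only [F_eq_cdf P hV]
  exact ProbabilityTheory.monotone_cdf _

lemma quant_le_iff {Ω : Type*} [MeasurableSpace Ω] (P : Measure Ω) [IsProbabilityMeasure P]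
    {V : Ω → ℝ} (hV : Measurable V) (hF : Continuous fun y => (P {ω | V ω ≤ y}).toReal)
    {τ : ℝ} (hτ : τ ∈ Ioo (0:ℝ) 1) (y : ℝ) :
    quant P V τ ≤ y ↔ τ ≤ (P {ω | V ω ≤ y}).toReal := by
  have hne : {z : ℝ | τ ≤ (P {ω | V ω ≤ z}).toReal}.Nonempty := by
    obtain ⟨y, hy⟩ := exists_F_gt P hV hτ.2
    exact ⟨y, hy.le⟩
  have hbd : BddBelow {z : ℝ | τ ≤ (P {ω | V ω ≤ z}).toReal} := by
    obtain ⟨y, hy⟩ := exists_F_lt P hV hτ.1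
    refine ⟨y, fun z hz => ?_⟩
    by_contra! h
    exact absurd (F_mono P hV h.le) (not_le.2 (lt_of_lt_of_le hy hz))
  have hcl : IsClosed {z : ℝ | τ ≤ (P {ω | V ω ≤ z}).toReal} :=
    isClosed_le continuous_const hF
  constructor
  · intro h
    have h1 : τ ≤ (P {ω | V ω ≤ quant P V τ}).toReal := hcl.csInf_mem hne hbd
    exact h1.trans (F_mono P hV h)
  · intro h
    exact csInf_le hbd h

lemma F_quant {Ω : Type*} [MeasurableSpace Ω] (P : Measure Ω) [IsProbabilityMeasure P]
    {V : Ω → ℝ} (hV : Measurable V) (hF : Continuous fun y => (P {ω | V ω ≤ y}).toReal)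
    {τ : ℝ} (hτ : τ ∈ Ioo (0:ℝ) 1) :
    (P {ω | V ω ≤ quant P V τ}).toReal = τ := by
  apply le_antisymm
  · by_contra! h
    obtain ⟨y0, hy0⟩ := exists_F_lt P hV hτ.1
    have hle : y0 ≤ quant P V τ := by
      by_contra! h'
      have := F_mono P hV h'.le
      simp only at this
      linarith
    obtain ⟨z, hz, hz'⟩ := intermediate_value_Icc hle hF.continuousOn ⟨hy0.le, h.le⟩
    have h1 := (quant_le_iff P hV hF hτ z).2 hz'.ge
    have h2 : z = quant P V τ := le_antisymm hz.2 h1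
    rw [h2] at hz'
    simp only at hz'
    linarith
  · exact (quant_le_iff P hV hF hτ _).1 le_rfl

lemma quant_mono {Ω : Type*} [MeasurableSpace Ω] (P : Measure Ω) [IsProbabilityMeasure P]
    {V : Ω → ℝ} (hV : Measurable V) (hF : Continuous fun y => (P {ω | V ω ≤ y}).toReal) :
    MonotoneOn (quant P V) (Ioo 0 1) := by
  intro a ha b hb hab
  rw [quant_le_iff P hV hF ha, F_quant P hV hF hb]
  exact hab

lemma map_quant {Ω : Type*} [MeasurableSpace Ω] (P : Measure Ω) [IsProbabilityMeasure P]
    {V : Ω → ℝ} (hV : Measurable V) (hF : Continuous fun y => (P {ω | V ω ≤ y}).toReal) :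
    (volume.restrict (Ioo (0:ℝ) 1)).map (quant P V) = P.map V := by
  have hq : AEMeasurable (quant P V) (volume.restrict (Ioo (0:ℝ) 1)) :=
    aemeasurable_restrict_of_monotoneOn measurableSet_Ioo (quant_mono P hV hF)
  have : IsProbabilityMeasure (P.map V) := Measure.isProbabilityMeasure_map hV.aemeasurable
  have : IsFiniteMeasure ((volume.restrict (Ioo (0:ℝ) 1)).map (quant P V)) := inferInstance
  apply Measure.ext_of_Iic
  intro y
  rw [Measure.map_apply_of_aemeasurable hq measurableSet_Iic,
    Measure.map_apply hV measurableSet_Iic, Measure.restrict_apply' measurableSet_Ioo]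
  set r := (P {ω | V ω ≤ y}).toReal with hr
  have hr1 : r ≤ 1 := by
    rw [hr]; exact ENNReal.toReal_le_of_le_ofReal zero_le_one (by simpa using prob_le_one)
  have hPr : P (V ⁻¹' Iic y) = ENNReal.ofReal r := by
    rw [hr, ENNReal.ofReal_toReal (measure_ne_top _ _)]; rfl
  have hset : quant P V ⁻¹' Iic y ∩ Ioo 0 1 = Iic r ∩ Ioo 0 1 := by
    ext τ
    simp only [mem_inter_iff, mem_preimage, mem_Iic]
    constructor
    · rintro ⟨h1, h2⟩; exact ⟨(quant_le_iff P hV hF h2 y).1 h1, h2⟩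
    · rintro ⟨h1, h2⟩; exact ⟨(quant_le_iff P hV hF h2 y).2 h1, h2⟩
  rw [hset, hPr]
  apply le_antisymm
  · calc volume (Iic r ∩ Ioo 0 1) ≤ volume (Ioc 0 r) :=
        measure_mono fun z hz => ⟨hz.2.1, hz.1⟩
      _ = _ := by simp
  · calc ENNReal.ofReal r = volume (Ioo 0 r) := by simp
      _ ≤ _ := measure_mono fun z hz => (⟨hz.2.le, hz.1, hz.2.trans_le hr1⟩ : z ∈ Iic r ∩ Ioo 0 1)

lemma quant_integrable {Ω : Type*} [MeasurableSpace Ω] (P : Measure Ω) [IsProbabilityMeasure P]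
    {V : Ω → ℝ} (hV : Measurable V) (hF : Continuous fun y => (P {ω | V ω ≤ y}).toReal)
    (hi : Integrable V P) :
    IntegrableOn (quant P V) (Ioo 0 1) ∧
      ∫ τ in Ioo (0:ℝ) 1, quant P V τ = ∫ ω, V ω ∂P := by
  have hq : AEMeasurable (quant P V) (volume.restrict (Ioo (0:ℝ) 1)) :=
    aemeasurable_restrict_of_monotoneOn measurableSet_Ioo (quant_mono P hV hF)
  have hid : Integrable (fun y : ℝ => y) (P.map V) :=
    (integrable_map_measure aestronglyMeasurable_id hV.aemeasurable).2 hi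
  have e := map_quant P hV hF
  constructor
  · rw [← e] at hid
    exact (integrable_map_measure aestronglyMeasurable_id hq).1 hid
  · have h1 : ∫ y, y ∂(P.map V) = ∫ ω, V ω ∂P :=
      integral_map hV.aemeasurable aestronglyMeasurable_id
    rw [← h1, ← e]
    exact (integral_map hq aestronglyMeasurable_id).symm

/-- `c`-dependence in measure form, for both treatment values. -/
lemma cdep_bounds {Ω : Type*} [MeasurableSpace Ω] (P : Measure Ω) [IsProbabilityMeasure P]
    {V : Ω → ℝ} (hV : Measurable V) {X : Ω → ℕ} (hXm : Measurable X) (hX01 : ∀ ω, X ω ≤ 1)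
    {c : ℝ} (hd : CDep P X V c) {x : ℕ} (hx : x ≤ 1) {A : Set ℝ} (hA : MeasurableSet A) :
    (px P X x - c) * P.real (V ⁻¹' A) ≤ P.real (V ⁻¹' A ∩ {ω | X ω = x}) ∧
    P.real (V ⁻¹' A ∩ {ω | X ω = x}) ≤ (px P X x + c) * P.real (V ⁻¹' A) := by
  obtain ⟨g, hg, hg01, hgA, hgc⟩ := hd
  have : IsProbabilityMeasure (P.map V) := Measure.isProbabilityMeasure_map hV.aemeasurable
  have hvA : (P.map V).real A = P.real (V ⁻¹' A) := by
    rw [measureReal_def, Measure.map_apply hV hA, measureReal_def]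
  have hgi : Integrable g (P.map V) := by
    refine Integrable.of_bound hg.aestronglyMeasurable 1 (Filter.Eventually.of_forall fun v => ?_)
    rw [Real.norm_eq_abs, abs_of_nonneg (hg01 v).1]; exact (hg01 v).2
  have hg1 := hgA A hA
  have hpx1 : (P {ω | X ω = 1}).toReal = px P X 1 := rfl
  rw [hpx1] at hgc
  have key : (px P X 1 - c) * P.real (V ⁻¹' A) ≤ P.real (V ⁻¹' A ∩ {ω | X ω = 1}) ∧
    P.real (V ⁻¹' A ∩ {ω | X ω = 1}) ≤ (px P X 1 + c) * P.real (V ⁻¹' A) := by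
    rw [inter_comm, measureReal_def P ({ω | X ω = 1} ∩ V ⁻¹' A), hg1, ← hvA]
    have hc1 : ∀ k : ℝ, ∫ v in A, k ∂(P.map V) = k * (P.map V).real A := by
      intro k; rw [setIntegral_const, smul_eq_mul, mul_comm]
    rw [← hc1, ← hc1]
    have hae := ae_restrict_of_ae (s := A) hgc
    constructor
    · apply integral_mono_ae (integrable_const _) hgi.integrableOn
      filter_upwards [hae] with v hv
      have := abs_le.1 hv
      linarith [this.1]
    · apply integral_mono_ae hgi.integrableOn (integrable_const _)
      filter_upwards [hae] with v hv
      have := abs_le.1 hv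
      linarith [this.2]
  interval_cases x
  · have hX1 : MeasurableSet {ω | X ω = 1} := hXm (measurableSet_singleton 1)
    have hcompl : {ω | X ω = 0} = {ω | X ω = 1}ᶜ := by
      ext ω; have := hX01 ω; simp only [mem_setOf_eq, mem_compl_iff]; omega
    have h0 : px P X 0 = 1 - px P X 1 := by
      have := probReal_compl_eq_one_sub (μ := P) hX1
      rw [← hcompl] at this
      exact this
    have h1 := measureReal_inter_add_diff (μ := P) (s := V ⁻¹' A) hX1
    rw [diff_eq, ← hcompl] at h1
    rw [h0]
    constructor <;> nlinarith [key.1, key.2]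
  · exact key

lemma level_bounds {p c τ a : ℝ} (hp : 0 < p)
    (h1 : (p - c) * τ ≤ a) (h2 : a ≤ (p + c) * τ) (h3 : (p - c) * (1 - τ) ≤ p - a)
    (h4 : p - a ≤ (p + c) * (1 - τ)) (h5 : 0 ≤ a) (h6 : a ≤ τ) (h7 : 0 ≤ p - a)
    (h8 : p - a ≤ 1 - τ) : qLo p c τ ≤ a / p ∧ a / p ≤ qUp p c τ := by
  unfold qLo qUp
  have e1 : τ + c / p * min τ (1 - τ) = (p * τ + c * min τ (1 - τ)) / p := by
    field_simp
  have e2 : τ - c / p * min τ (1 - τ) = (p * τ - c * min τ (1 - τ)) / p := by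
    field_simp
  have e3 : (τ - 1) / p + 1 = (τ - 1 + p) / p := by field_simp
  rw [e1, e2, e3]
  refine ⟨max_le (max_le ?_ ?_) (by positivity), le_min (le_min ?_ ?_) ?_⟩
  · apply div_le_div_of_nonneg_right _ hp.le
    rcases min_cases τ (1 - τ) with h | h <;> rw [h.1] <;> linarith
  · apply div_le_div_of_nonneg_right _ hp.le
    linarith
  · apply div_le_div_of_nonneg_right _ hp.le
    rcases min_cases τ (1 - τ) with h | h <;> rw [h.1] <;> linarith
  · apply div_le_div_of_nonneg_right _ hp.le
    linarith
  · rw [div_le_one hp]; linarith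

lemma key_bounds {Ω : Type*} [MeasurableSpace Ω]
    (P : Measure Ω) [IsProbabilityMeasure P]
    (Yv : ℕ → Ω → ℝ) (X : Ω → ℕ) (Y : Ω → ℝ)
    (hYm : ∀ x, Measurable (Yv x)) (hXm : Measurable X)
    (hX01 : ∀ ω, X ω ≤ 1)
    (hY : ∀ ω, Y ω = Yv (X ω) ω)
    (hp1 : px P X 1 ∈ Set.Ioo (0:ℝ) 1)
    (lo hi : ℕ → EReal)
    (hcont : ∀ x ≤ 1, ∀ x' ≤ 1, Continuous (condCDF' P X (Yv x) x'))
    (hmono : ∀ x ≤ 1, ∀ x' ≤ 1, StrictMonoOn (condCDF' P X (Yv x) x')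
      {y : ℝ | lo x ≤ (y : EReal) ∧ (y : EReal) ≤ hi x})
    (hsupp : ∀ x ≤ 1, ∀ x' ≤ 1, ∀ y : ℝ,
      ((y : EReal) ≤ lo x → condCDF' P X (Yv x) x' y = 0) ∧
      (hi x ≤ (y : EReal) → condCDF' P X (Yv x) x' y = 1))
    (c : ℝ) (x : ℕ) (hx : x ≤ 1)
    (hdep : CDep P X (Yv x) c) :
    (Continuous fun y => (P {ω | Yv x ω ≤ y}).toReal) ∧
    ∀ τ ∈ Ioo (0:ℝ) 1,
      Qgen (condCDF' P X Y x) (lo x) (hi x) (qLo (px P X x) c τ) ≤ (quant P (Yv x) τ : EReal) ∧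
      (quant P (Yv x) τ : EReal) ≤
        Qgen (condCDF' P X Y x) (lo x) (hi x) (qUp (px P X x) c τ) := by
  have hX1 : MeasurableSet {ω | X ω = 1} := hXm (measurableSet_singleton 1)
  have hcompl : {ω | X ω = 0} = {ω | X ω = 1}ᶜ := by
    ext ω; have := hX01 ω; simp only [mem_setOf_eq, mem_compl_iff]; omega
  have h0 : px P X 0 = 1 - px P X 1 := by
    have := probReal_compl_eq_one_sub (μ := P) hX1
    rw [← hcompl] at this
    exact this
  have hpos : ∀ x' ≤ 1, 0 < px P X x' := by
    intro x' hx'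
    interval_cases x'
    · rw [h0]; linarith [hp1.2]
    · exact hp1.1
  have hmul : ∀ x' ≤ 1, ∀ y, P.real ({ω | Yv x ω ≤ y} ∩ {ω | X ω = x'}) =
      px P X x' * condCDF' P X (Yv x) x' y := by
    intro x' hx' y
    have := (hpos x' hx').ne'
    unfold condCDF'
    change _ = px P X x' * (_ / px P X x')
    rw [mul_div_cancel₀ _ this]; rfl
  have hFsum : ∀ y, (P {ω | Yv x ω ≤ y}).toReal =
      px P X 1 * condCDF' P X (Yv x) 1 y + px P X 0 * condCDF' P X (Yv x) 0 y := by
    intro y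
    rw [← hmul 1 le_rfl, ← hmul 0 zero_le_one, hcompl, ← diff_eq,
      measureReal_inter_add_diff hX1]
    rfl
  have hF : Continuous fun y => (P {ω | Yv x ω ≤ y}).toReal := by
    simp only [hFsum]
    exact (continuous_const.mul (hcont x hx 1 le_rfl)).add
      (continuous_const.mul (hcont x hx 0 zero_le_one))
  refine ⟨hF, fun τ hτ => ?_⟩
  have hGeq : condCDF' P X Y x = condCDF' P X (Yv x) x := by
    ext y
    unfold condCDF'
    have : {ω | Y ω ≤ y} ∩ {ω | X ω = x} = {ω | Yv x ω ≤ y} ∩ {ω | X ω = x} := by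
      ext ω
      simp only [mem_inter_iff, mem_setOf_eq, hY]
      constructor <;> rintro ⟨h1, h2⟩ <;> simp_all
    rw [this]
  rw [hGeq]
  have hFq := F_quant P (hYm x) hF hτ
  set q := quant P (Yv x) τ with hq
  set G := condCDF' P X (Yv x) x with hG
  set p := px P X x with hp
  have hppos : 0 < p := hpos x hx
  have hpdef : p = P.real {ω | X ω = x} := rfl
  -- measures of the two pieces
  have hXx : MeasurableSet {ω | X ω = x} := hXm (measurableSet_singleton x)
  have hsplit : ∀ y, P.real (Yv x ⁻¹' Iic y ∩ {ω | X ω = x}) +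
      P.real (Yv x ⁻¹' Ioi y ∩ {ω | X ω = x}) = p := by
    intro y
    have := measureReal_inter_add_diff (μ := P) (s := {ω | X ω = x})
      (hYm x (measurableSet_Iic (a := y)))
    rw [inter_comm, diff_eq, ← preimage_compl, compl_Iic, inter_comm _ (Yv x ⁻¹' Ioi y)] at this
    rw [this, hpdef]
  have hIic : ∀ y, P.real (Yv x ⁻¹' Iic y) = (P {ω | Yv x ω ≤ y}).toReal := fun y => rfl
  have hIoi : ∀ y, P.real (Yv x ⁻¹' Ioi y) = 1 - (P {ω | Yv x ω ≤ y}).toReal := by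
    intro y
    rw [← hIic, ← probReal_compl_eq_one_sub (hYm x measurableSet_Iic), ← preimage_compl, compl_Iic]
  have hpG : ∀ y, P.real (Yv x ⁻¹' Iic y ∩ {ω | X ω = x}) = p * G y := fun y => hmul x hx y
  have hle1 : ∀ y, p * G y ≤ (P {ω | Yv x ω ≤ y}).toReal := by
    intro y; rw [← hpG, ← hIic]; exact measureReal_mono inter_subset_left
  have hle2 : ∀ y, p - p * G y ≤ 1 - (P {ω | Yv x ω ≤ y}).toReal := by
    intro y; rw [← hpG, ← hIoi, ← hsplit y, add_sub_cancel_left]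
    exact measureReal_mono inter_subset_left
  have hq1 := cdep_bounds P (hYm x) hXm hX01 hdep hx (measurableSet_Iic (a := q))
  have hq2 := cdep_bounds P (hYm x) hXm hX01 hdep hx (measurableSet_Ioi (a := q))
  have hn1 : 0 ≤ P.real (Yv x ⁻¹' Iic q ∩ {ω | X ω = x}) := measureReal_nonneg
  have hn2 : 0 ≤ P.real (Yv x ⁻¹' Ioi q ∩ {ω | X ω = x}) := measureReal_nonneg
  have hs : P.real (Yv x ⁻¹' Ioi q ∩ {ω | X ω = x}) = p - p * G q := by
    rw [← hpG, ← hsplit q]; ring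
  have hl1 := hle1 q
  have hl2 := hle2 q
  rw [hIic, hpG, hFq] at hq1
  rw [hIoi, hs, hFq] at hq2
  rw [hpG] at hn1
  rw [hs] at hn2
  rw [hFq] at hl1 hl2
  obtain ⟨hb1, hb2⟩ := level_bounds hppos hq1.1 hq1.2 hq2.1 hq2.2 hn1 hl1 hn2 hl2
  rw [mul_div_cancel_left₀ _ hppos.ne'] at hb1 hb2
  -- location of the quantile
  have hlo : lo x < (q : EReal) := by
    by_contra! h
    have := hFsum q
    rw [(hsupp x hx 1 le_rfl q).1 h, (hsupp x hx 0 zero_le_one q).1 h, hFq] at this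
    linarith [hτ.1]
  have hhi : (q : EReal) < hi x := by
    by_contra! h
    have := hFsum q
    rw [(hsupp x hx 1 le_rfl q).2 h, (hsupp x hx 0 zero_le_one q).2 h, hFq, h0] at this
    linarith [hτ.2]
  have hGmono : ∀ y, G q ≤ G y → q ≤ y := by
    intro y hy
    by_contra! hyq
    have hyq' : (y : EReal) < q := by exact_mod_cast hyq
    by_cases hyl : lo x ≤ (y : EReal)
    · have := hmono x hx x hx ⟨hyl, (hyq'.trans hhi).le⟩ ⟨hlo.le, hhi.le⟩ hyq
      exact absurd this (not_lt.2 hy)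
    · have hz := (hsupp x hx x hx y).1 (not_le.1 hyl).le
      -- pick a point strictly between
      obtain ⟨r, hr1, hr2⟩ := EReal.lt_iff_exists_real_btwn.1 hlo
      have h1 := hmono x hx x hx ⟨hr1.le, (hr2.trans hhi).le⟩ ⟨hlo.le, hhi.le⟩
        (by exact_mod_cast hr2)
      have h2 : 0 ≤ condCDF' P X (Yv x) x r := by unfold condCDF'; positivity
      have h3 : G y = 0 := hz
      have h4 : condCDF' P X (Yv x) x r < G q := h1
      linarith
  constructor
  · unfold Qgen
    split_ifs with h1 h2
    · exact hlo.le
    · -- then `G q ≥ 1`, impossible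
      exfalso
      obtain ⟨r, hr1, hr2⟩ := EReal.lt_iff_exists_real_btwn.1 hhi
      have h3 : G q < G r := hmono x hx x hx ⟨hlo.le, hhi.le⟩
        ⟨(hlo.trans hr1).le, hr2.le⟩ (by exact_mod_cast hr1)
      have h4 : p * G r ≤ p := by
        rw [← hpG, hpdef]; exact measureReal_mono inter_subset_right
      have h5 : G r ≤ 1 := by
        by_contra! h; nlinarith
      linarith
    · rw [EReal.coe_le_coe_iff]
      refine csInf_le ?_ (show q ∈ {y | qLo p c τ ≤ G y} from hb1)
      obtain ⟨y0, hy0⟩ := exists_F_lt P (hYm x) (mul_pos hppos (not_le.1 h1))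
      refine ⟨y0, fun z hz => ?_⟩
      by_contra! h
      have h3 := F_mono P (hYm x) h.le
      simp only at h3
      have h4 := hle1 z
      have h5 : qLo p c τ ≤ G z := hz
      nlinarith
  · unfold Qgen
    split_ifs with h1 h2
    · exfalso
      obtain ⟨r, hr1, hr2⟩ := EReal.lt_iff_exists_real_btwn.1 hlo
      have h3 : G r < G q := hmono x hx x hx ⟨hr1.le, (hr2.trans hhi).le⟩ ⟨hlo.le, hhi.le⟩
        (by exact_mod_cast hr2)
      have h4 : 0 ≤ G r := by rw [hG]; unfold condCDF'; positivity
      linarith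
    · exact hhi.le
    · rw [EReal.coe_le_coe_iff]
      apply le_csInf
      · have : 1 - p * (1 - qUp p c τ) < 1 := by nlinarith [not_le.1 h2]
        obtain ⟨y0, hy0⟩ := exists_F_gt P (hYm x) this
        refine ⟨y0, ?_⟩
        have h3 := hle2 y0
        simp only [mem_setOf_eq]
        by_contra! h
        nlinarith
      · intro y hy
        exact hGmono y (hb2.trans hy)

/-- Bounds on mean potential outcomes and on the ATE under `c`-dependence:
`E(Y_x) ∈ [∫_0^1 Q̲ᶜ_x(τ) dτ, ∫_0^1 Q̄ᶜ_x(τ) dτ]` and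
`E(Y_1 - Y_0) ∈ [∫_0^1 (Q̲ᶜ_1(τ) - Q̄ᶜ_0(τ)) dτ, ∫_0^1 (Q̄ᶜ_1(τ) - Q̲ᶜ_0(τ)) dτ]`,
where the integrals may take the values `±∞`. -/
theorem ate_bounds {Ω : Type*} [MeasurableSpace Ω]
    (P : Measure Ω) [IsProbabilityMeasure P]
    (Yv : ℕ → Ω → ℝ) (X : Ω → ℕ) (Y : Ω → ℝ)
    (hYm : ∀ x, Measurable (Yv x)) (hXm : Measurable X)
    (hX01 : ∀ ω, X ω ≤ 1)
    (hY : ∀ ω, Y ω = Yv (X ω) ω)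
    (hp1 : px P X 1 ∈ Set.Ioo (0:ℝ) 1)
    (lo hi : ℕ → EReal) (hlh : ∀ x ≤ 1, lo x < hi x)
    (hcont : ∀ x ≤ 1, ∀ x' ≤ 1, Continuous (condCDF' P X (Yv x) x'))
    (hmono : ∀ x ≤ 1, ∀ x' ≤ 1, StrictMonoOn (condCDF' P X (Yv x) x')
      {y : ℝ | lo x ≤ (y : EReal) ∧ (y : EReal) ≤ hi x})
    (hsupp : ∀ x ≤ 1, ∀ x' ≤ 1, ∀ y : ℝ,
      ((y : EReal) ≤ lo x → condCDF' P X (Yv x) x' y = 0) ∧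
      (hi x ≤ (y : EReal) → condCDF' P X (Yv x) x' y = 1))
    (c : ℝ) (hc : c ∈ Set.Icc (0:ℝ) 1)
    (hdep1 : CDep P X (Yv 1) c) (hdep0 : CDep P X (Yv 0) c)
    (hint : ∀ x ≤ 1, Integrable (Yv x) P)
    (hcondint : ∀ x ≤ 1, IntegrableOn Y {ω | X ω = x} P) :
    (∀ x ≤ 1,
      eint01 (fun τ => Qgen (condCDF' P X Y x) (lo x) (hi x) (qLo (px P X x) c τ)) ≤
        ((∫ ω, Yv x ω ∂P : ℝ) : EReal) ∧
      ((∫ ω, Yv x ω ∂P : ℝ) : EReal) ≤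
        eint01 (fun τ => Qgen (condCDF' P X Y x) (lo x) (hi x) (qUp (px P X x) c τ))) ∧
    (eint01 (fun τ => Qgen (condCDF' P X Y 1) (lo 1) (hi 1) (qLo (px P X 1) c τ) -
          Qgen (condCDF' P X Y 0) (lo 0) (hi 0) (qUp (px P X 0) c τ)) ≤
        ((∫ ω, (Yv 1 ω - Yv 0 ω) ∂P : ℝ) : EReal) ∧
      ((∫ ω, (Yv 1 ω - Yv 0 ω) ∂P : ℝ) : EReal) ≤
        eint01 (fun τ => Qgen (condCDF' P X Y 1) (lo 1) (hi 1) (qUp (px P X 1) c τ) -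
          Qgen (condCDF' P X Y 0) (lo 0) (hi 0) (qLo (px P X 0) c τ))) := by
  have hdep : ∀ x ≤ 1, CDep P X (Yv x) c := by
    intro x hx
    interval_cases x
    · exact hdep0
    · exact hdep1
  have K := fun x hx => key_bounds P Yv X Y hYm hXm hX01 hY hp1 lo hi hcont hmono hsupp c x hx
    (hdep x hx)
  have I := fun x hx => quant_integrable P (hYm x) (K x hx).1 (hint x hx)
  refine ⟨fun x hx => ?_, ?_⟩
  · rw [← (I x hx).2, ← eint01_coe' (I x hx).1]
    exact ⟨eint01_mono' fun τ hτ => ((K x hx).2 τ hτ).1,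
      eint01_mono' fun τ hτ => ((K x hx).2 τ hτ).2⟩
  · have I1 := I 1 le_rfl
    have I0 := I 0 zero_le_one
    have e : ∫ ω, (Yv 1 ω - Yv 0 ω) ∂P =
        ∫ τ in Ioo (0:ℝ) 1, (quant P (Yv 1) τ - quant P (Yv 0) τ) := by
      rw [integral_sub (hint 1 le_rfl) (hint 0 zero_le_one), integral_sub I1.1 I0.1, I1.2, I0.2]
    rw [e, ← eint01_coe' (h := fun τ => quant P (Yv 1) τ - quant P (Yv 0) τ) (I1.1.sub I0.1)]
    have K1 := (K 1 le_rfl).2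
    have K0 := (K 0 zero_le_one).2
    refine ⟨eint01_mono' fun τ hτ => ?_, eint01_mono' fun τ hτ => ?_⟩
    · simp only [EReal.coe_sub]
      exact EReal.sub_le_sub (K1 τ hτ).1 (K0 τ hτ).2
    · simp only [EReal.coe_sub]
      exact EReal.sub_le_sub (K1 τ hτ).2 (K0 τ hτ).1
end
end

section
/- Let Y_1, Y_0, X be {0,1}-valued random variables with observed outcome Y = X·Y_1 + (1−X)·Y_0, p_x = P(X = x), p_1 ∈ (0,1), and P(Y_x = 1 | X = x') ∈ (0,1) for all x, x' ∈ {0,1}. Fix x ∈ {0,1} and c ∈ [0,1], and suppose |P(X = 1 | Y_x = v) − p_1| ≤ c for v ∈ {0,1}. Then, writing p_{1|x} = P(Y = 1 | X = x), p_{1|x}·p_x / min{p_x + c, 1} ≤ P(Y_x = 1) ≤ min{ (p_{1|x}·p_x/(p_x − c))·1(p_x > c) + 1(p_x ≤ c), p_{1|x}·p_x + (1 − p_x) }. -/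
open MeasureTheory Set

noncomputable section

/-- Bounds on `P(Y_x = 1)` for binary potential outcomes under the discrete
`c`-dependence condition `|P(X=1 ∣ Y_x = v) - p₁| ≤ c` for `v ∈ {0,1}`:
`p_{1|x} p_x / min{p_x + c, 1} ≤ P(Y_x = 1)
  ≤ min{ (p_{1|x} p_x/(p_x - c))1(p_x > c) + 1(p_x ≤ c), p_{1|x} p_x + (1 - p_x) }`. -/
theorem binary_outcome_bounds {Ω : Type*} [MeasurableSpace Ω]
    (P : Measure Ω) [IsProbabilityMeasure P]
    (Yv : ℕ → Ω → ℕ) (X : Ω → ℕ) (Y : Ω → ℕ)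
    (hYm : ∀ x, Measurable (Yv x)) (hXm : Measurable X)
    (hY01 : ∀ x ω, Yv x ω ≤ 1) (hX01 : ∀ ω, X ω ≤ 1)
    (hY : ∀ ω, Y ω = Yv (X ω) ω)
    (hp1 : (P {ω | X ω = 1}).toReal ∈ Set.Ioo (0:ℝ) 1)
    (hsupp : ∀ x ≤ 1, ∀ x' ≤ 1,
      (P ({ω | Yv x ω = 1} ∩ {ω | X ω = x'})).toReal / (P {ω | X ω = x'}).toReal ∈
        Set.Ioo (0:ℝ) 1)
    (x : ℕ) (hx : x ≤ 1) (c : ℝ) (hc : c ∈ Set.Icc (0:ℝ) 1)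
    (hdep : ∀ v ≤ 1,
      |(P ({ω | X ω = 1} ∩ {ω | Yv x ω = v})).toReal / (P {ω | Yv x ω = v}).toReal -
        (P {ω | X ω = 1}).toReal| ≤ c) :
    (P ({ω | Y ω = 1} ∩ {ω | X ω = x})).toReal / (P {ω | X ω = x}).toReal *
        (P {ω | X ω = x}).toReal / min ((P {ω | X ω = x}).toReal + c) 1 ≤
      (P {ω | Yv x ω = 1}).toReal ∧
    (P {ω | Yv x ω = 1}).toReal ≤
      min
        (if c < (P {ω | X ω = x}).toReal then
          (P ({ω | Y ω = 1} ∩ {ω | X ω = x})).toReal / (P {ω | X ω = x}).toReal *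
            (P {ω | X ω = x}).toReal / ((P {ω | X ω = x}).toReal - c)
        else 1)
        ((P ({ω | Y ω = 1} ∩ {ω | X ω = x})).toReal / (P {ω | X ω = x}).toReal *
            (P {ω | X ω = x}).toReal + (1 - (P {ω | X ω = x}).toReal)) := by
  have mX : ∀ k, MeasurableSet {ω | X ω = k} := fun k => hXm (measurableSet_singleton k)
  have mY : MeasurableSet {ω | Yv x ω = 1} := hYm x (measurableSet_singleton 1)
  have hYe : {ω | Y ω = 1} ∩ {ω | X ω = x} = {ω | Yv x ω = 1} ∩ {ω | X ω = x} := by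
    ext ω
    simp only [mem_inter_iff, mem_ofPred_eq, hY]
    constructor
    · rintro ⟨h, rfl⟩
      exact ⟨h, rfl⟩
    · rintro ⟨h, rfl⟩
      exact ⟨h, rfl⟩
  rw [hYe]
  have hs := hsupp x hx x hx
  have hd := hdep 1 le_rfl
  have hc0 : {ω | X ω = 0} = {ω | X ω = 1}ᶜ := by
    ext ω
    have := hX01 ω
    simp only [mem_compl_iff, mem_ofPred_eq]
    omega
  have hsum : P.real {ω | X ω = 0} = 1 - P.real {ω | X ω = 1} := by
    rw [hc0, probReal_compl_eq_one_sub (mX 1)]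
  have hsplit : P.real ({ω | Yv x ω = 1} ∩ {ω | X ω = 1}) +
      P.real ({ω | Yv x ω = 1} ∩ {ω | X ω = 0}) = P.real {ω | Yv x ω = 1} := by
    rw [hc0, ← sdiff_eq]
    exact measureReal_inter_add_sdiff (mX 1)
  have hle : P.real ({ω | Yv x ω = 1} ∩ {ω | X ω = x}) ≤ P.real {ω | Yv x ω = 1} :=
    measureReal_mono inter_subset_left
  have hq1 : P.real {ω | Yv x ω = 1} ≤ 1 := measureReal_le_one
  have hb1 : P.real ({ω | Yv x ω = 1} ∩ {ω | X ω = 1}) ≤ P.real {ω | X ω = 1} :=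
    measureReal_mono inter_subset_right
  have hb0 : P.real ({ω | Yv x ω = 1} ∩ {ω | X ω = 0}) ≤ P.real {ω | X ω = 0} :=
    measureReal_mono inter_subset_right
  rw [inter_comm {ω | X ω = 1}] at hd
  simp only [← measureReal_def] at *
  have hp : 0 < P.real {ω | X ω = x} := by
    interval_cases x
    · rw [hsum]; linarith [hp1.2]
    · exact hp1.1
  have ha : 0 < P.real ({ω | Yv x ω = 1} ∩ {ω | X ω = x}) := by
    have := mul_pos hs.1 hp
    rwa [div_mul_cancel₀ _ hp.ne'] at this
  have hq : 0 < P.real {ω | Yv x ω = 1} := ha.trans_le hle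
  have hup : P.real {ω | Yv x ω = 1} ≤ P.real ({ω | Yv x ω = 1} ∩ {ω | X ω = x}) +
      (1 - P.real {ω | X ω = x}) := by
    interval_cases x <;> linarith
  have hD : |P.real ({ω | Yv x ω = 1} ∩ {ω | X ω = x}) / P.real {ω | Yv x ω = 1} -
      P.real {ω | X ω = x}| ≤ c := by
    have hx' : x = 0 ∨ x = 1 := by omega
    rcases hx' with rfl | rfl
    · rw [abs_sub_comm]
      convert hd using 2
      rw [hsum, eq_sub_iff_add_eq'.mpr hsplit, sub_div, div_self hq.ne']
      ring
    · exact hd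
  rw [div_mul_cancel₀ _ hp.ne']
  generalize P.real ({ω | Yv x ω = 1} ∩ {ω | X ω = x}) = a at *
  generalize P.real {ω | Yv x ω = 1} = q at *
  rw [abs_le] at hD
  have h1 : a ≤ (P.real {ω | X ω = x} + c) * q := (div_le_iff₀ hq).1 (by linarith [hD.2])
  have h2 : (P.real {ω | X ω = x} - c) * q ≤ a := (le_div_iff₀ hq).1 (by linarith [hD.1])
  refine ⟨?_, le_min ?_ hup⟩
  · rw [div_le_iff₀ (lt_min (by linarith [hc.1]) one_pos)]
    rcases min_choice (P.real {ω | X ω = x} + c) 1 with h | h <;> rw [h] <;> linarith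
  · by_cases h : c < P.real {ω | X ω = x}
    · refine le_of_le_of_eq ?_ (if_pos h).symm
      rw [le_div_iff₀ (by linarith)]
      linarith
    · exact le_of_le_of_eq hq1 (if_neg h).symm
end
end
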